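/- arXiv:1102.1328 — 6 statements merged into one kernel-verified Lean document; each statement's English description precedes it below -/
import Mathlib

section
/- For every real p > 1 there exists a constant C > 0 such that for every locally absolutely continuous function h : (−1,1) → ℝ with ∫_{−1}^{1} h(y)²·ρ(y) dy < ∞ and ∫_{−1}^{1} h′(y)²·ρ(y)·(1−y²) dy < ∞, one has the Hardy–Sobolev inequality ∫_{−1}^{1} h(y)²·ρ(y)/(1−y²) dy ≤ C·∫_{−1}^{1} h(y)²·ρ(y) dy + C·∫_{−1}^{1} h′(y)²·ρ(y)·(1−y²) dy. -/
/-!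
Write `α = 2/(p-1) > 0`, `w = 1 - y²`, so that `ρ = w ^ α`. The inequality comes from the boundary
function `F(y) = y h(y)² ρ(y)`. Since `y² = 1 - w`,
`F' = (1 + 2α) h² ρ + 2 y h h' ρ - 2α h² ρ / w`,
and the cross term is at most `α h² ρ / w + h'² ρ w / α` by Young's inequality and `|y| ≤ 1`. Hence
`α h² ρ / w ≤ (2α + 1) h² ρ + h'² ρ w / α - F'` almost everywhere (`pointwise_bound`).

Integrating over `[-r, r]` with `0 < r < 1`, the boundary term is `-(F(r) - F(-r))`, which is
nonpositive because `F(r) ≥ 0 ≥ F(-r)`; so no information on the behaviour of `h` at `±1` is needed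
(`truncated_bound`). Monotone convergence as `r → 1` concludes.
-/

open Set MeasureTheory

noncomputable section

/-- The weight ρ(y) = (1-y²)^{2/(p-1)}. -/
def rho (p y : ℝ) : ℝ := (1 - y ^ 2) ^ (2 / (p - 1))

/-- `h` is locally absolutely continuous on (-1,1): on every compact subinterval,
its derivative is integrable and the fundamental theorem of calculus holds. -/
def LocAC (h : ℝ → ℝ) : Prop :=
  ∀ a b : ℝ, -1 < a → a ≤ b → b < 1 →
    IntervalIntegrable (deriv h) MeasureTheory.volume a b ∧
    ∀ x ∈ Set.Icc a b, h x = h a + ∫ t in a..x, deriv h t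

/-- A locally absolutely continuous function, in the sense of `LocAC`, is absolutely continuous in
the `ε`-`δ` sense on compact subintervals. -/
lemma LocAC.absolutelyContinuousOnInterval {h : ℝ → ℝ} (hh : LocAC h) {a b : ℝ} (ha : -1 < a)
    (hab : a ≤ b) (hb : b < 1) : AbsolutelyContinuousOnInterval h a b := by
  obtain ⟨hint, hftc⟩ := hh a b ha hab hb
  have hH := hint.absolutelyContinuousOnInterval_intervalIntegral (c := a) left_mem_uIcc
  rw [absolutelyContinuousOnInterval_iff] at hH ⊢
  intro ε hε
  obtain ⟨δ, hδ, H⟩ := hH ε hε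
  refine ⟨δ, hδ, fun E h1 h2 => ?_⟩
  convert H E h1 h2 using 1
  refine Finset.sum_congr rfl fun i hi => ?_
  obtain ⟨m1, m2⟩ := h1.1 i hi
  rw [uIcc_of_le hab] at m1 m2
  rw [hftc _ m1, hftc _ m2, dist_add_left]

/-- Here `u`, `u'` and `R` stand for `h y`, `h' y` and `ρ y`, and the last parenthesis is the
derivative of `y h² ρ`. -/
lemma pointwise_bound {α y u u' R : ℝ} (hα : 0 < α) (hy : 0 < 1 - y ^ 2) (hR : 0 ≤ R) :
    u ^ 2 * R / (1 - y ^ 2) ≤ (2 * α + 1) / α * (u ^ 2 * R) + 1 / α ^ 2 * (u' ^ 2 * R * (1 - y ^ 2))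
      - 1 / α * ((2 * u * u') * (y * R) + u ^ 2 * (R + y * (-(2 * y) * α * (R / (1 - y ^ 2))))) := by
  obtain ⟨w, hw⟩ : ∃ w, w = 1 - y ^ 2 := ⟨_, rfl⟩
  rw [← hw] at hy ⊢
  have hy2 : y ^ 2 = 1 - w := by linarith
  rw [← sub_nonneg]
  have key : (2 * α + 1) / α * (u ^ 2 * R) + 1 / α ^ 2 * (u' ^ 2 * R * w)
      - 1 / α * ((2 * u * u') * (y * R) + u ^ 2 * (R + y * (-(2 * y) * α * (R / w))))
      - u ^ 2 * R / w
      = R / (α ^ 2 * w) * ((α * u - y * (u' * w)) ^ 2 + w * (u' * w) ^ 2) := by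
    field_simp
    linear_combination R * (2 * u ^ 2 * α ^ 2 - u' ^ 2 * w ^ 2) * hy2
  rw [key]
  positivity

lemma one_sub_sq_pos {r y : ℝ} (hr : r < 1) (hy : y ∈ Icc (-r) r) : 0 < 1 - y ^ 2 := by
  nlinarith [hy.1, hy.2]

lemma rho_pos {p y : ℝ} (hy : 0 < 1 - y ^ 2) : 0 < rho p y := Real.rpow_pos_of_pos hy _

lemma hasDerivAt_rho {p y : ℝ} (hy : 0 < 1 - y ^ 2) :
    HasDerivAt (rho p) (-(2 * y) * (2 / (p - 1)) * (rho p y / (1 - y ^ 2))) y := by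
  have h1 : HasDerivAt (fun y : ℝ => 1 - y ^ 2) (-(2 * y)) y := by
    simpa using (hasDerivAt_pow 2 y).const_sub 1
  have h2 := h1.rpow_const (p := 2 / (p - 1)) (Or.inl hy.ne')
  rw [Real.rpow_sub_one hy.ne'] at h2
  exact h2

lemma contDiffAt_rho {p y : ℝ} (hy : 0 < 1 - y ^ 2) : ContDiffAt ℝ 1 (rho p) y := by
  have h1 : ContDiffAt ℝ 1 (fun y : ℝ => 1 - y ^ 2) y := by fun_prop
  exact h1.rpow_const_of_ne hy.ne'

lemma truncated_bound {p : ℝ} (hp : 1 < p) {h : ℝ → ℝ} (hh : LocAC h) {r : ℝ} (hr0 : 0 < r)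
    (hr : r < 1)
    (hD : IntegrableOn (fun y => deriv h y ^ 2 * rho p y * (1 - y ^ 2)) (Ioc (-r) r)) :
    IntegrableOn (fun y => h y ^ 2 * rho p y / (1 - y ^ 2)) (Ioc (-r) r) ∧
    IntegrableOn (fun y => h y ^ 2 * rho p y) (Ioc (-r) r) ∧
    ∫ y in Ioc (-r) r, h y ^ 2 * rho p y / (1 - y ^ 2) ≤
      (2 * (2 / (p - 1)) + 1) / (2 / (p - 1)) * (∫ y in Ioc (-r) r, h y ^ 2 * rho p y) +
      1 / (2 / (p - 1)) ^ 2 *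
        ∫ y in Ioc (-r) r, deriv h y ^ 2 * rho p y * (1 - y ^ 2) := by
  have hle : -r ≤ r := by linarith
  have hα : 0 < 2 / (p - 1) := div_pos two_pos (by linarith)
  have hac := hh.absolutelyContinuousOnInterval (a := -r) (b := r) (by linarith) hle hr
  have hcont : ContinuousOn h (Icc (-r) r) := by simpa [uIcc_of_le hle] using hac.continuousOn
  have hρc : ContinuousOn (rho p) (Icc (-r) r) := fun y hy =>
    (hasDerivAt_rho (one_sub_sq_pos hr hy)).continuousAt.continuousWithinAt
  have hBc : ContinuousOn (fun y => h y ^ 2 * rho p y) (Icc (-r) r) := (hcont.pow 2).mul hρc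
  have hAc : ContinuousOn (fun y => h y ^ 2 * rho p y / (1 - y ^ 2)) (Icc (-r) r) :=
    hBc.div (by fun_prop) fun y hy => (one_sub_sq_pos hr hy).ne'
  have hA := (hAc.integrableOn_Icc (μ := volume)).mono_set Ioc_subset_Icc_self
  have hB := (hBc.integrableOn_Icc (μ := volume)).mono_set Ioc_subset_Icc_self
  refine ⟨hA, hB, ?_⟩
  have hφ : AbsolutelyContinuousOnInterval (fun y => y * rho p y) (-r) r := by
    refine ContDiffOn.absolutelyContinuousOnInterval fun y hy => ?_
    rw [uIcc_of_le hle] at hy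
    exact (contDiffAt_id.mul (contDiffAt_rho (one_sub_sq_pos hr hy))).contDiffWithinAt
  have hF : AbsolutelyContinuousOnInterval (fun y => h y ^ 2 * (y * rho p y)) (-r) r := by
    have := (hac.mul hac).mul hφ
    convert this using 1
    ext y
    simp [pow_two]
  have hFint := hF.intervalIntegrable_deriv
  rw [intervalIntegrable_iff_integrableOn_Ioc_of_le hle] at hFint
  have hftc := hF.integral_deriv_eq_sub
  rw [intervalIntegral.integral_of_le hle] at hftc
  have hbdry : 0 ≤ ∫ y in Ioc (-r) r, deriv (fun y => h y ^ 2 * (y * rho p y)) y := by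
    rw [hftc]
    have h1 := rho_pos (p := p) (one_sub_sq_pos hr (right_mem_Icc.2 hle))
    have h2 := rho_pos (p := p) (one_sub_sq_pos hr (left_mem_Icc.2 hle))
    have h3 : 0 ≤ h r ^ 2 * (r * rho p r) := by positivity
    have h4 : 0 ≤ h (-r) ^ 2 * (r * rho p (-r)) := by positivity
    linarith
  have hae : ∀ᵐ y ∂(volume.restrict (Ioc (-r) r)), h y ^ 2 * rho p y / (1 - y ^ 2) ≤
      (2 * (2 / (p - 1)) + 1) / (2 / (p - 1)) * (h y ^ 2 * rho p y) +
      1 / (2 / (p - 1)) ^ 2 * (deriv h y ^ 2 * rho p y * (1 - y ^ 2)) -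
      1 / (2 / (p - 1)) * deriv (fun y => h y ^ 2 * (y * rho p y)) y := by
    rw [ae_restrict_iff' measurableSet_Ioc]
    filter_upwards [hac.ae_differentiableAt] with y hdiff hy
    have hyI := Ioc_subset_Icc_self hy
    have hw := one_sub_sq_pos hr hyI
    have hd := (hdiff (by rwa [uIcc_of_le hle])).hasDerivAt
    have hFd := (hd.fun_pow 2).fun_mul ((hasDerivAt_id' y).fun_mul (hasDerivAt_rho (p := p) hw))
    rw [hFd.deriv]
    have := pointwise_bound (u := h y) (u' := deriv h y) hα hw (rho_pos (p := p) hw).le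
    simpa using this
  have hmono := integral_mono_ae hA
    (((hB.const_mul _).add (hD.const_mul _)).sub (hFint.const_mul _)) hae
  simp only [Pi.sub_apply, Pi.add_apply] at hmono
  rw [integral_sub (Integrable.fun_add (hB.const_mul _) (hD.const_mul _)) (hFint.const_mul _),
    integral_add (hB.const_mul _) (hD.const_mul _), integral_const_mul, integral_const_mul,
    integral_const_mul] at hmono
  have := mul_nonneg (one_div_pos.2 hα).le hbdry
  linarith

theorem stmt6 (p : ℝ) (hp : 1 < p) :
    ∃ C : ℝ, 0 < C ∧
      ∀ h : ℝ → ℝ, LocAC h →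
        (∫⁻ y in Set.Ioo (-1 : ℝ) 1, ENNReal.ofReal (h y ^ 2 * rho p y)) < ⊤ →
        (∫⁻ y in Set.Ioo (-1 : ℝ) 1,
            ENNReal.ofReal (deriv h y ^ 2 * rho p y * (1 - y ^ 2))) < ⊤ →
        (∫⁻ y in Set.Ioo (-1 : ℝ) 1, ENNReal.ofReal (h y ^ 2 * rho p y / (1 - y ^ 2)))
          ≤ ENNReal.ofReal C *
              (∫⁻ y in Set.Ioo (-1 : ℝ) 1, ENNReal.ofReal (h y ^ 2 * rho p y))
            + ENNReal.ofReal C *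
              (∫⁻ y in Set.Ioo (-1 : ℝ) 1,
                ENNReal.ofReal (deriv h y ^ 2 * rho p y * (1 - y ^ 2))) := by
  have hα : 0 < 2 / (p - 1) := div_pos two_pos (by linarith)
  set c₁ := (2 * (2 / (p - 1)) + 1) / (2 / (p - 1)) with hc₁
  set c₂ := 1 / (2 / (p - 1)) ^ 2 with hc₂
  have hc₁0 : 0 < c₁ := by positivity
  have hc₂0 : 0 < c₂ := by positivity
  refine ⟨c₁ + c₂, by positivity, fun h hh _ hfin => ?_⟩
  have hrho : Measurable (rho p) := by unfold rho; fun_prop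
  have hnn : ∀ {r y : ℝ}, r < 1 → y ∈ Ioc (-r) r → 0 < 1 - y ^ 2 ∧ 0 < rho p y :=
    fun hr hy => ⟨one_sub_sq_pos hr (Ioc_subset_Icc_self hy),
      rho_pos (one_sub_sq_pos hr (Ioc_subset_Icc_self hy))⟩
  -- the exhausting radii `r n = 1 - 1 / (n + 2)`
  set r : ℕ → ℝ := fun n => 1 - 1 / ((n : ℝ) + 2) with hrdef
  have hr0 : ∀ n, 0 < r n := fun n => by
    have : 1 / ((n : ℝ) + 2) < 1 := by
      rw [div_lt_one (by positivity)]
      linarith [n.cast_nonneg (α := ℝ)]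
    simp only [hrdef]
    linarith
  have hr1 : ∀ n, r n < 1 := fun n => by
    have : 0 < 1 / ((n : ℝ) + 2) := by positivity
    simp only [hrdef]
    linarith
  have hrmono : Monotone r := fun m n hmn => by
    simp only [hrdef]
    gcongr
  have hsub : ∀ n, Ioc (-r n) (r n) ⊆ Ioo (-1 : ℝ) 1 := fun n y hy =>
    ⟨by linarith [hy.1, hr1 n], by linarith [hy.2, hr1 n]⟩
  have hU : Ioo (-1 : ℝ) 1 = ⋃ n, Ioc (-r n) (r n) := by
    refine Subset.antisymm (fun y hy => ?_) (iUnion_subset hsub)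
    have hy' : |y| < 1 := abs_lt.2 hy
    obtain ⟨n, hn⟩ := exists_nat_one_div_lt (sub_pos.2 hy')
    have hn' : 1 / ((n : ℝ) + 2) ≤ 1 / ((n : ℝ) + 1) := by gcongr; norm_num
    have hlt : |y| < r n := by
      simp only [hrdef]
      linarith
    exact mem_iUnion.2 ⟨n, (abs_lt.1 hlt).1, (abs_lt.1 hlt).2.le⟩
  have hdir : Directed (· ⊆ ·) fun n => Ioc (-r n) (r n) :=
    directed_of_isDirected_le fun m n hmn =>
      Ioc_subset_Ioc (neg_le_neg (hrmono hmn)) (hrmono hmn)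
  conv_lhs => rw [hU]
  rw [setLIntegral_iUnion_of_directed _ hdir]
  refine iSup_le fun n => ?_
  have nnA : 0 ≤ᵐ[volume.restrict (Ioc (-r n) (r n))]
      fun y => h y ^ 2 * rho p y / (1 - y ^ 2) := by
    filter_upwards [ae_restrict_mem measurableSet_Ioc] with y hy
    obtain ⟨h1, h2⟩ := hnn (hr1 n) hy
    exact div_nonneg (mul_nonneg (sq_nonneg _) h2.le) h1.le
  have nnB : 0 ≤ᵐ[volume.restrict (Ioc (-r n) (r n))] fun y => h y ^ 2 * rho p y := by
    filter_upwards [ae_restrict_mem measurableSet_Ioc] with y hy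
    exact mul_nonneg (sq_nonneg _) (hnn (hr1 n) hy).2.le
  have nnD : 0 ≤ᵐ[volume.restrict (Ioc (-r n) (r n))]
      fun y => deriv h y ^ 2 * rho p y * (1 - y ^ 2) := by
    filter_upwards [ae_restrict_mem measurableSet_Ioc] with y hy
    obtain ⟨h1, h2⟩ := hnn (hr1 n) hy
    exact mul_nonneg (mul_nonneg (sq_nonneg _) h2.le) h1.le
  have hDm : Measurable fun y => deriv h y ^ 2 * rho p y * (1 - y ^ 2) :=
    (((measurable_deriv h).pow_const 2).mul hrho).mul (by fun_prop)
  have hD : IntegrableOn (fun y => deriv h y ^ 2 * rho p y * (1 - y ^ 2)) (Ioc (-r n) (r n)) :=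
    (lintegral_ofReal_ne_top_iff_integrable hDm.aestronglyMeasurable nnD).1
      ((lintegral_mono_set (hsub n)).trans_lt hfin).ne
  obtain ⟨hA, hB, hineq⟩ := truncated_bound hp hh (hr0 n) (hr1 n) hD
  rw [← ofReal_integral_eq_lintegral_ofReal hA nnA]
  refine (ENNReal.ofReal_le_ofReal hineq).trans (ENNReal.ofReal_add_le.trans ?_)
  rw [ENNReal.ofReal_mul hc₁0.le, ENNReal.ofReal_mul hc₂0.le,
    ofReal_integral_eq_lintegral_ofReal hB nnB, ofReal_integral_eq_lintegral_ofReal hD nnD]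
  refine add_le_add (mul_le_mul' (ENNReal.ofReal_le_ofReal (by linarith))
    (lintegral_mono_set (hsub n))) (mul_le_mul' (ENNReal.ofReal_le_ofReal (by linarith))
    (lintegral_mono_set (hsub n)))

end
end

section
/- Let p > 1, d ∈ (−1,1) and ν₀ ∈ ℝ, and define w(y,s) = κ₀·(1−d²)^{1/(p−1)}·(1 + d·y + ν₀·e^{s})^{−2/(p−1)} on the open set Ω = {(y,s) : |y| < 1 and 1 + d·y + ν₀·e^{s} > 0}. Then w is of class C² on Ω and solves the one-dimensional similarity equation there: ∂ₛ²w = (1/ρ)·∂ᵧ(ρ(1−y²)∂ᵧw) − (2(p+1)/(p−1)²)·w + |w|^{p−1}w − ((p+3)/(p−1))·∂ₛw − 2y·∂ᵧ∂ₛw. (These are the heteroclinic 'soliton' solutions κ₁*(d, ν₀e^s) connecting κ(d) to 0 or to ∞.) -/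
/- STATEMENT 8: The heteroclinic soliton
w(y,s) = κ₀ (1-d²)^{1/(p-1)} (1 + dy + ν₀ e^s)^{-2/(p-1)} is C² on
Ω = {(y,s) : |y| < 1, 1 + dy + ν₀ e^s > 0} and solves the one-dimensional
similarity equation there. -/

/-!
With `a = 2 / (p - 1)`, `E = ν₀ e^s` and `u = 1 + d y + E`, the soliton is `w = K u ^ (-a)`, where
`K ^ (p - 1) = a (a + 1) (1 - d²)`, and the coefficients of the equation are
`2 (p + 1) / (p - 1)² = a (a + 1)` and `(p + 3) / (p - 1) = 1 + 2 a`. Smoothness holds because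
`u > 0` on `Ω`. Every term of the equation is a multiple of `a K u ^ (-a - 2)`
(for the nonlinear one, `|w| ^ (p - 1) = a (a + 1) (1 - d²) u ^ (-2)`), and after division the
equation becomes a polynomial identity in `d, y, E, a`, which reduces to
`(u - E)² = (1 + d y)²`. The derivatives are computed by `hasDerivAt_profile_y` and
`hasDerivAt_profile_s`, the nonlinear term by `abs_solW_rpow`.
-/

open Set

noncomputable section

/-- The heteroclinic soliton w(y,s) = κ₀ (1-d²)^{1/(p-1)} (1+dy+ν₀e^s)^{-2/(p-1)},
with κ₀ = (2(p+1)/(p-1)²)^{1/(p-1)}. -/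
def solW (p d ν₀ y s : ℝ) : ℝ :=
  (2 * (p + 1) / (p - 1) ^ 2) ^ (1 / (p - 1)) * (1 - d ^ 2) ^ (1 / (p - 1)) *
    (1 + d * y + ν₀ * Real.exp s) ^ (-(2 / (p - 1)))

/-- The domain Ω = {(y,s) : |y| < 1, 1 + dy + ν₀ e^s > 0}. -/
def OmegaSet (d ν₀ : ℝ) : Set (ℝ × ℝ) :=
  {q | |q.1| < 1 ∧ 0 < 1 + d * q.1 + ν₀ * Real.exp q.2}

theorem hasDerivAt_profile_y (d ν₀ r y s : ℝ) (hu : 0 < 1 + d * y + ν₀ * Real.exp s) :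
    HasDerivAt (fun z => (1 + d * z + ν₀ * Real.exp s) ^ r)
      (d * r * (1 + d * y + ν₀ * Real.exp s) ^ (r - 1)) y := by
  have h : HasDerivAt (fun z => 1 + d * z + ν₀ * Real.exp s) d y := by
    simpa using (((hasDerivAt_id y).const_mul d).const_add 1).add_const (ν₀ * Real.exp s)
  exact h.rpow_const (Or.inl hu.ne')

theorem hasDerivAt_profile_s (d ν₀ r y s : ℝ) (hu : 0 < 1 + d * y + ν₀ * Real.exp s) :
    HasDerivAt (fun σ => (1 + d * y + ν₀ * Real.exp σ) ^ r)
      (ν₀ * Real.exp s * r * (1 + d * y + ν₀ * Real.exp s) ^ (r - 1)) s := by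
  have h : HasDerivAt (fun σ => 1 + d * y + ν₀ * Real.exp σ) (ν₀ * Real.exp s) s :=
    ((Real.hasDerivAt_exp s).const_mul ν₀).const_add _
  exact h.rpow_const (Or.inl hu.ne')

/-- The constant factor of the soliton, `κ₀ (1 - d²)^{1/(p-1)}`. -/
def solK (p d : ℝ) : ℝ :=
  (2 * (p + 1) / (p - 1) ^ 2) ^ (1 / (p - 1)) * (1 - d ^ 2) ^ (1 / (p - 1))

theorem deriv_solW_y (p d ν₀ y s : ℝ) (hu : 0 < 1 + d * y + ν₀ * Real.exp s) :
    deriv (fun z => solW p d ν₀ z s) y = solK p d *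
      (d * -(2 / (p - 1)) * (1 + d * y + ν₀ * Real.exp s) ^ (-(2 / (p - 1)) - 1)) :=
  ((hasDerivAt_profile_y d ν₀ _ y s hu).const_mul (solK p d)).deriv

theorem deriv_solW_s (p d ν₀ y s : ℝ) (hu : 0 < 1 + d * y + ν₀ * Real.exp s) :
    deriv (fun σ => solW p d ν₀ y σ) s = solK p d *
      (ν₀ * Real.exp s * -(2 / (p - 1)) *
        (1 + d * y + ν₀ * Real.exp s) ^ (-(2 / (p - 1)) - 1)) :=
  ((hasDerivAt_profile_s d ν₀ _ y s hu).const_mul (solK p d)).deriv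

theorem abs_solW_rpow (p : ℝ) (hp : 1 < p) (d : ℝ) (hd : d ∈ Set.Ioo (-1 : ℝ) 1) (ν₀ y s : ℝ)
    (hu : 0 < 1 + d * y + ν₀ * Real.exp s) :
    |solW p d ν₀ y s| ^ (p - 1) = 2 * (p + 1) / (p - 1) ^ 2 * (1 - d ^ 2) *
      ((1 + d * y + ν₀ * Real.exp s) ^ 2)⁻¹ := by
  have hp1 : 0 < p - 1 := by linarith
  have hd2 : 0 < 1 - d ^ 2 := by nlinarith [hd.1, hd.2]
  have hc : 0 < 2 * (p + 1) / (p - 1) ^ 2 := by positivity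
  unfold solW
  rw [abs_of_pos (by positivity), Real.mul_rpow (by positivity) (by positivity),
    Real.mul_rpow (by positivity) (by positivity), ← Real.rpow_mul hc.le,
    ← Real.rpow_mul hd2.le, ← Real.rpow_mul hu.le, one_div_mul_cancel hp1.ne',
    show -(2 / (p - 1)) * (p - 1) = -(2 : ℝ) by field_simp, Real.rpow_neg hu.le]
  norm_num

theorem stmt8 (p : ℝ) (hp : 1 < p) (d : ℝ) (hd : d ∈ Set.Ioo (-1 : ℝ) 1) (ν₀ : ℝ) :
    ContDiffOn ℝ 2 (fun q : ℝ × ℝ => solW p d ν₀ q.1 q.2) (OmegaSet d ν₀) ∧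
    ∀ y s : ℝ, (y, s) ∈ OmegaSet d ν₀ →
      deriv (fun σ => deriv (fun σ' => solW p d ν₀ y σ') σ) s =
        (1 / rho p y) *
            deriv (fun z => rho p z * (1 - z ^ 2) * deriv (fun z' => solW p d ν₀ z' s) z) y
          - 2 * (p + 1) / (p - 1) ^ 2 * solW p d ν₀ y s
          + |solW p d ν₀ y s| ^ (p - 1) * solW p d ν₀ y s
          - (p + 3) / (p - 1) * deriv (fun σ => solW p d ν₀ y σ) s
          - 2 * y * deriv (fun z => deriv (fun σ => solW p d ν₀ z σ) s) y := by
  have hp1 : 0 < p - 1 := by linarith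
  constructor
  · unfold solW
    refine contDiffOn_const.mul (ContDiffOn.rpow_const_of_ne ?_ fun q hq => hq.2.ne')
    fun_prop
  rintro y s ⟨hy, hu⟩
  simp only at hy hu
  have hy2 : 0 < 1 - y ^ 2 := by
    have := (sq_lt_one_iff_abs_lt_one y).2 hy
    linarith
  -- The first derivatives are known only where `u > 0`; second derivatives need this nearby.
  have hevs : ∀ᶠ σ in nhds s, 0 < 1 + d * y + ν₀ * Real.exp σ :=
    (isOpen_lt (by fun_prop) (by fun_prop)).mem_nhds hu
  have hevy : ∀ᶠ z in nhds y, 0 < 1 + d * z + ν₀ * Real.exp s :=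
    (isOpen_lt (by fun_prop) (by fun_prop)).mem_nhds hu
  have hss := ((((((Real.hasDerivAt_exp s).const_mul ν₀).mul_const (-(2 / (p - 1)))).mul
    (hasDerivAt_profile_s d ν₀ (-(2 / (p - 1)) - 1) y s hu)).const_mul
    (solK p d)).congr_of_eventuallyEq (f₁ := fun σ => deriv (fun σ' => solW p d ν₀ y σ') σ)
    (hevs.mono fun σ h => deriv_solW_s p d ν₀ y σ h)).deriv
  have hys := ((((hasDerivAt_profile_y d ν₀ (-(2 / (p - 1)) - 1) y s hu).const_mul
    (ν₀ * Real.exp s * -(2 / (p - 1)))).const_mul (solK p d)).congr_of_eventuallyEq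
    (f₁ := fun z => deriv (fun σ => solW p d ν₀ z σ) s)
    (hevy.mono fun z h => deriv_solW_s p d ν₀ z s h)).deriv
  have hsq : HasDerivAt (fun z : ℝ => 1 - z ^ 2) (-(2 * y)) y := by
    simpa using (hasDerivAt_pow 2 y).const_sub 1
  have hyy := ((((hsq.rpow_const (p := 2 / (p - 1)) (Or.inl hy2.ne')).mul hsq).mul
    (((hasDerivAt_profile_y d ν₀ (-(2 / (p - 1)) - 1) y s hu).const_mul
      (d * -(2 / (p - 1)))).const_mul (solK p d))).congr_of_eventuallyEq
    (f₁ := fun z => rho p z * (1 - z ^ 2) * deriv (fun z' => solW p d ν₀ z' s) z)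
    (hevy.mono fun z h => by
      simp only [deriv_solW_y p d ν₀ z s h, rho, Pi.mul_apply])).deriv
  rw [hss, hys, hyy, deriv_solW_s p d ν₀ y s hu, abs_solW_rpow p hp d hd ν₀ y s hu,
    show solW p d ν₀ y s = solK p d * (1 + d * y + ν₀ * Real.exp s) ^ (-(2 / (p - 1))) from rfl]
  have hc : 2 * (p + 1) / (p - 1) ^ 2 = 2 / (p - 1) * (2 / (p - 1) + 1) := by
    field_simp
    ring
  have hb : (p + 3) / (p - 1) = 1 + 2 * (2 / (p - 1)) := by
    field_simp
    ring
  rw [hc, hb]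
  unfold rho
  simp only [Pi.mul_apply]
  -- Treating `a`, `K`, `E` and the two remaining powers as free variables leaves a rational identity.
  generalize 2 / (p - 1) = a
  generalize solK p d = K
  generalize hE : ν₀ * Real.exp s = E at hu ⊢
  rw [Real.rpow_sub_one hy2.ne', Real.rpow_sub_one hu.ne' (-a - 1), Real.rpow_sub_one hu.ne' (-a)]
  have hR : (1 - y ^ 2) ^ a ≠ 0 := (Real.rpow_pos_of_pos hy2 a).ne'
  generalize (1 - y ^ 2) ^ a = R at hR ⊢
  generalize (1 + d * y + E) ^ (-a) = U
  have hu' := hu.ne'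
  have hy' := hy2.ne'
  field_simp
  ring

end
end

section
/- Let p > 1, N ≥ 1 an integer, r₀ > 0 and T₀ ∈ ℝ. Let u be a C² function on an open set Ω ⊆ {(r,t) : r > 0} satisfying the radial wave equation ∂ₜ²u = ∂ᵣ²u + ((N−1)/r)·∂ᵣu + |u|^{p−1}u on Ω. Define w(y,s) = e^{−2s/(p−1)}·u(r₀ + y·e^{−s}, T₀ − e^{−s}). Then at every (y,s) with |y| < 1, r₀ + y·e^{−s} > 0 and (r₀ + y·e^{−s}, T₀ − e^{−s}) ∈ Ω, the function w satisfies ∂ₛ²w = (1/ρ)·∂ᵧ(ρ(1−y²)∂ᵧw) − (2(p+1)/(p−1)²)·w + |w|^{p−1}w − ((p+3)/(p−1))·∂ₛw − 2y·∂ᵧ∂ₛw + e^{−s}·((N−1)/(r₀+ye^{−s}))·∂ᵧw. -/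
/-!
The identity is the chain rule. Along `r = r₀ + y e^{-s}`, `t = T₀ - e^{-s}` a differentiable function
`G (r, t)` satisfies `∂_y G = e^{-s} G_r` and `∂_s G = e^{-s} (G_t - y G_r)` (`hasDerivAt_selfSim_y`,
`hasDerivAt_selfSim_s`). Applied to `u`, `u_r` and `u_t` these give every derivative of `w` that occurs in
the equation, in terms of `u, u_r, u_t, u_rr, u_rt, u_tt`; the two mixed derivatives of `u` agree
because `u` is `C²`. The weight contributes
`ρ⁻¹ ∂_y (ρ (1 - y²) g) = (1 - y²) g' - 2 (1 + 2/(p-1)) y g` (`hasDerivAt_rho_mul`), and the power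
nonlinearity rescales by `e^{-2s}`, the same factor as the second derivatives of `u`. What is left is a
polynomial identity modulo the wave equation.
-/

open Set

noncomputable section

open Filter Topology

lemma hasDerivAt_selfSim_y {G : ℝ × ℝ → ℝ} {r₀ T₀ y s : ℝ}
    (hG : DifferentiableAt ℝ G (r₀ + y * Real.exp (-s), T₀ - Real.exp (-s))) :
    HasDerivAt (fun z => G (r₀ + z * Real.exp (-s), T₀ - Real.exp (-s)))
      (Real.exp (-s) *
        fderiv ℝ G (r₀ + y * Real.exp (-s), T₀ - Real.exp (-s)) (1, 0)) y := by
  have h1 : HasDerivAt (fun z : ℝ => (r₀ + z * Real.exp (-s), T₀ - Real.exp (-s)))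
      (Real.exp (-s), 0) y := by
    refine HasDerivAt.prodMk ?_ (hasDerivAt_const _ _)
    simpa using ((hasDerivAt_id y).mul_const (Real.exp (-s))).const_add r₀
  have h2 := HasFDerivAt.comp_hasDerivAt y hG.hasFDerivAt h1
  refine h2.congr_deriv ?_
  have : ((Real.exp (-s), 0) : ℝ × ℝ) = Real.exp (-s) • ((1, 0) : ℝ × ℝ) := by
    ext <;> simp
  rw [this, map_smul, smul_eq_mul]

lemma hasDerivAt_selfSim_s {G : ℝ × ℝ → ℝ} {r₀ T₀ y s : ℝ}
    (hG : DifferentiableAt ℝ G (r₀ + y * Real.exp (-s), T₀ - Real.exp (-s))) :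
    HasDerivAt (fun σ => G (r₀ + y * Real.exp (-σ), T₀ - Real.exp (-σ)))
      (Real.exp (-s) *
        (fderiv ℝ G (r₀ + y * Real.exp (-s), T₀ - Real.exp (-s)) (0, 1)
          - y * fderiv ℝ G (r₀ + y * Real.exp (-s), T₀ - Real.exp (-s)) (1, 0))) s := by
  have he : HasDerivAt (fun σ : ℝ => Real.exp (-σ)) (-Real.exp (-s)) s := by
    simpa using (hasDerivAt_neg s).exp
  have h1 : HasDerivAt (fun σ : ℝ => (r₀ + y * Real.exp (-σ), T₀ - Real.exp (-σ)))
      (y * -Real.exp (-s), - -Real.exp (-s)) s :=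
    ((he.const_mul y).const_add r₀).prodMk (he.const_sub T₀)
  have h2 := HasFDerivAt.comp_hasDerivAt s hG.hasFDerivAt h1
  refine h2.congr_deriv ?_
  have : ((y * -Real.exp (-s), - -Real.exp (-s)) : ℝ × ℝ)
      = Real.exp (-s) • (((0, 1) : ℝ × ℝ) - y • ((1, 0) : ℝ × ℝ)) := by
    ext <;> simp; ring
  rw [this, map_smul, map_sub, map_smul]
  simp

lemma deriv_fst_eq_fderiv {G : ℝ × ℝ → ℝ} {r t : ℝ} (hG : DifferentiableAt ℝ G (r, t)) :
    deriv (fun z => G (z, t)) r = fderiv ℝ G (r, t) (1, 0) :=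
  (HasFDerivAt.comp_hasDerivAt r hG.hasFDerivAt
    ((hasDerivAt_id r).prodMk (hasDerivAt_const r t))).deriv

lemma deriv_snd_eq_fderiv {G : ℝ × ℝ → ℝ} {r t : ℝ} (hG : DifferentiableAt ℝ G (r, t)) :
    deriv (fun z => G (r, z)) t = fderiv ℝ G (r, t) (0, 1) :=
  (HasFDerivAt.comp_hasDerivAt t hG.hasFDerivAt
    ((hasDerivAt_const t r).prodMk (hasDerivAt_id t))).deriv

lemma hasDerivAt_rho_mul {p y g' : ℝ} {g : ℝ → ℝ} (hy : |y| < 1) (hg : HasDerivAt g g' y) :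
    HasDerivAt (fun z => rho p z * (1 - z ^ 2) * g z)
      (rho p y * ((1 - y ^ 2) * g' - 2 * (1 + 2 / (p - 1)) * y * g y)) y := by
  have hpos : 0 < 1 - y ^ 2 := by
    have := (sq_lt_one_iff_abs_lt_one y).2 hy
    linarith
  have h1 : HasDerivAt (fun z : ℝ => 1 - z ^ 2) (-(2 * y)) y := by
    simpa using (hasDerivAt_pow 2 y).const_sub 1
  have h2 : HasDerivAt (rho p) _ y := h1.rpow_const (p := 2 / (p - 1)) (Or.inl hpos.ne')
  refine ((h2.mul h1).mul hg).congr_deriv ?_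
  have h3 : (1 - y ^ 2) ^ (2 / (p - 1) - 1) * (1 - y ^ 2) = rho p y := by
    rw [Real.rpow_sub_one hpos.ne', div_mul_cancel₀ _ hpos.ne', rho]
  simp only [Pi.mul_apply]
  linear_combination (-(2 * y) * (2 / (p - 1)) * g y) * h3

/-- The scaling of the power nonlinearity: `e^{-2s/(p-1)}` raised to the power `p - 1` is `e^{-2s}`. -/
lemma abs_exp_mul_rpow {p : ℝ} (hp : 1 < p) (s v : ℝ) :
    |Real.exp (-2 * s / (p - 1)) * v| ^ (p - 1) = Real.exp (-s) ^ 2 * |v| ^ (p - 1) := by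
  have hp' : p - 1 ≠ 0 := by linarith
  rw [abs_mul, Real.mul_rpow (abs_nonneg _) (abs_nonneg _), Real.abs_exp, ← Real.exp_mul,
    div_mul_cancel₀ _ hp', ← Real.exp_nat_mul]
  congr 2
  push_cast
  ring

theorem stmt9 (p : ℝ) (hp : 1 < p) (N : ℕ) (hN : 1 ≤ N) (r₀ : ℝ) (hr₀ : 0 < r₀) (T₀ : ℝ)
    (Ω : Set (ℝ × ℝ)) (hΩopen : IsOpen Ω) (hΩpos : ∀ q ∈ Ω, 0 < q.1)
    (u : ℝ → ℝ → ℝ) (hu : ContDiffOn ℝ 2 (fun q : ℝ × ℝ => u q.1 q.2) Ω)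
    (hueq : ∀ r t : ℝ, (r, t) ∈ Ω →
      deriv (fun τ => deriv (fun τ' => u r τ') τ) t =
        deriv (fun z => deriv (fun z' => u z' t) z) r
          + ((N : ℝ) - 1) / r * deriv (fun z => u z t) r
          + |u r t| ^ (p - 1) * u r t)
    (w : ℝ → ℝ → ℝ)
    (hw : ∀ y s : ℝ,
      w y s = Real.exp (-2 * s / (p - 1)) *
        u (r₀ + y * Real.exp (-s)) (T₀ - Real.exp (-s))) :
    ∀ y s : ℝ, |y| < 1 → 0 < r₀ + y * Real.exp (-s) →
      (r₀ + y * Real.exp (-s), T₀ - Real.exp (-s)) ∈ Ω →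
      deriv (fun σ => deriv (fun σ' => w y σ') σ) s =
        (1 / rho p y) *
            deriv (fun z => rho p z * (1 - z ^ 2) * deriv (fun z' => w z' s) z) y
          - 2 * (p + 1) / (p - 1) ^ 2 * w y s
          + |w y s| ^ (p - 1) * w y s
          - (p + 3) / (p - 1) * deriv (fun σ => w y σ) s
          - 2 * y * deriv (fun z => deriv (fun σ => w z σ) s) y
          + Real.exp (-s) * (((N : ℝ) - 1) / (r₀ + y * Real.exp (-s))) *
              deriv (fun z => w z s) y := by
  intro y s hy hr hmem
  have hp' : p - 1 ≠ 0 := by linarith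
  set U : ℝ × ℝ → ℝ := fun q => u q.1 q.2 with hU
  set A : ℝ × ℝ → ℝ := fun q => fderiv ℝ U q (1, 0) with hA
  set B : ℝ × ℝ → ℝ := fun q => fderiv ℝ U q (0, 1) with hB
  have hCD : ∀ q ∈ Ω, ContDiffAt ℝ 2 U q := fun q hq => hu.contDiffAt (hΩopen.mem_nhds hq)
  have hUd : ∀ q ∈ Ω, DifferentiableAt ℝ U q := fun q hq =>
    (hCD q hq).differentiableAt (by norm_num)
  have hFd : ∀ q ∈ Ω, DifferentiableAt ℝ (fderiv ℝ U) q := fun q hq =>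
    ((hCD q hq).fderiv_right (m := 1) (by norm_num)).differentiableAt (by norm_num)
  have hAd : ∀ q ∈ Ω, DifferentiableAt ℝ A q := fun q hq =>
    (hFd q hq).clm_apply (differentiableAt_const _)
  have hBd : ∀ q ∈ Ω, DifferentiableAt ℝ B q := fun q hq =>
    (hFd q hq).clm_apply (differentiableAt_const _)
  have hsymm : ∀ q ∈ Ω, fderiv ℝ A q (0, 1) = fderiv ℝ B q (1, 0) := by
    intro q hq
    have h := ((hCD q hq).isSymmSndFDerivAt (by simp)).eq (0, 1) (1, 0)
    rw [hA, hB, fderiv_clm_apply (hFd q hq) (differentiableAt_const _),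
      fderiv_clm_apply (hFd q hq) (differentiableAt_const _)]
    simpa using h
  -- Derivatives of `w` of first order, at every point of the domain.
  have hw' : w = fun y s => Real.exp (-2 * s / (p - 1)) *
      U (r₀ + y * Real.exp (-s), T₀ - Real.exp (-s)) := by
    funext y s; exact hw y s
  have hE : ∀ σ : ℝ, HasDerivAt (fun σ : ℝ => Real.exp (-2 * σ / (p - 1)))
      (-(2 / (p - 1)) * Real.exp (-2 * σ / (p - 1))) σ := by
    intro σ
    have h := (((hasDerivAt_id σ).const_mul (-2)).div_const (p - 1)).exp
    refine h.congr_deriv ?_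
    simp only [id]
    ring
  have hwy : ∀ z σ : ℝ, (r₀ + z * Real.exp (-σ), T₀ - Real.exp (-σ)) ∈ Ω →
      deriv (fun z' => w z' σ) z = Real.exp (-2 * σ / (p - 1)) *
        (Real.exp (-σ) * A (r₀ + z * Real.exp (-σ), T₀ - Real.exp (-σ))) := by
    intro z σ hq
    rw [hw']
    exact ((hasDerivAt_selfSim_y (hUd _ hq)).const_mul _).deriv
  have hws : ∀ z σ : ℝ, (r₀ + z * Real.exp (-σ), T₀ - Real.exp (-σ)) ∈ Ω →
      deriv (fun σ' => w z σ') σ =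
        -(2 / (p - 1)) * Real.exp (-2 * σ / (p - 1)) *
          U (r₀ + z * Real.exp (-σ), T₀ - Real.exp (-σ)) +
        Real.exp (-2 * σ / (p - 1)) *
        (Real.exp (-σ) * (B (r₀ + z * Real.exp (-σ), T₀ - Real.exp (-σ)) -
          z * A (r₀ + z * Real.exp (-σ), T₀ - Real.exp (-σ)))) := by
    intro z σ hq
    rw [hw']
    exact ((hE σ).mul (hasDerivAt_selfSim_s (hUd _ hq))).deriv
  -- The first-order formulas hold near `(y, s)` in each variable, so they can be differentiated.
  have hevy : ∀ᶠ z in 𝓝 y, (r₀ + z * Real.exp (-s), T₀ - Real.exp (-s)) ∈ Ω := by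
    have hc : ContinuousAt (fun z : ℝ => (r₀ + z * Real.exp (-s), T₀ - Real.exp (-s))) y := by
      fun_prop
    exact hc.eventually (hΩopen.mem_nhds hmem)
  have hevs : ∀ᶠ σ in 𝓝 s, (r₀ + y * Real.exp (-σ), T₀ - Real.exp (-σ)) ∈ Ω := by
    have hc : ContinuousAt (fun σ : ℝ => (r₀ + y * Real.exp (-σ), T₀ - Real.exp (-σ))) s := by
      fun_prop
    exact hc.eventually (hΩopen.mem_nhds hmem)
  have hexp : HasDerivAt (fun σ : ℝ => Real.exp (-σ)) (-Real.exp (-s)) s := by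
    simpa using (hasDerivAt_neg s).exp
  have hUs := hasDerivAt_selfSim_s (hUd _ hmem)
  have hAs := hasDerivAt_selfSim_s (hAd _ hmem)
  have hBs := hasDerivAt_selfSim_s (hBd _ hmem)
  have hUy := hasDerivAt_selfSim_y (hUd _ hmem)
  have hAy := hasDerivAt_selfSim_y (hAd _ hmem)
  have hBy := hasDerivAt_selfSim_y (hBd _ hmem)
  have hwss := (EventuallyEq.deriv_eq (hevs.mono fun σ hσ => hws y σ hσ)).trans
    ((((hE s).const_mul (-(2 / (p - 1)))).mul hUs).add
      ((hE s).mul (hexp.mul (hBs.sub (hAs.const_mul y))))).deriv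
  have hwsy := (EventuallyEq.deriv_eq (hevy.mono fun z hz => hws z s hz)).trans
    ((hUy.const_mul (-(2 / (p - 1)) * Real.exp (-2 * s / (p - 1)))).add
      (((hBy.sub ((hasDerivAt_id y).mul hAy)).const_mul (Real.exp (-s))).const_mul
        (Real.exp (-2 * s / (p - 1))))).deriv
  have hwyy : HasDerivAt (fun z => deriv (fun z' => w z' s) z) _ y :=
    ((hAy.const_mul (Real.exp (-s))).const_mul
      (Real.exp (-2 * s / (p - 1)))).congr_of_eventuallyEq
      (hevy.mono fun z hz => hwy z s hz)
  have hrho : rho p y ≠ 0 := by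
    have := (sq_lt_one_iff_abs_lt_one y).2 hy
    exact (Real.rpow_pos_of_pos (by linarith) _).ne'
  have hweight := (hasDerivAt_rho_mul (p := p) hy hwyy).deriv
  -- The wave equation at the given point, in terms of `A` and `B`.
  have hwave : fderiv ℝ B (r₀ + y * Real.exp (-s), T₀ - Real.exp (-s)) (0, 1) =
      fderiv ℝ A (r₀ + y * Real.exp (-s), T₀ - Real.exp (-s)) (1, 0)
        + ((N : ℝ) - 1) / (r₀ + y * Real.exp (-s)) *
          A (r₀ + y * Real.exp (-s), T₀ - Real.exp (-s))
        + |U (r₀ + y * Real.exp (-s), T₀ - Real.exp (-s))| ^ (p - 1) *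
          U (r₀ + y * Real.exp (-s), T₀ - Real.exp (-s)) := by
    have h := hueq _ _ hmem
    generalize r₀ + y * Real.exp (-s) = r at *
    generalize T₀ - Real.exp (-s) = t at *
    have e1 : (fun τ => deriv (fun τ' => u r τ') τ) =ᶠ[𝓝 t] fun τ => B (r, τ) := by
      have hc : ContinuousAt (fun τ : ℝ => (r, τ)) t := by fun_prop
      exact (hc.eventually (hΩopen.mem_nhds hmem)).mono fun τ hτ =>
        deriv_snd_eq_fderiv (hUd _ hτ)
    have e2 : (fun z => deriv (fun z' => u z' t) z) =ᶠ[𝓝 r] fun z => A (z, t) := by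
      have hc : ContinuousAt (fun z : ℝ => (z, t)) r := by fun_prop
      exact (hc.eventually (hΩopen.mem_nhds hmem)).mono fun z hz =>
        deriv_fst_eq_fderiv (hUd _ hz)
    have e3 : deriv (fun z => u z t) r = A (r, t) := e2.self_of_nhds
    rw [e1.deriv_eq, e2.deriv_eq, e3, deriv_snd_eq_fderiv (hBd _ hmem),
      deriv_fst_eq_fderiv (hAd _ hmem)] at h
    exact h
  have hwval : w y s = Real.exp (-2 * s / (p - 1)) *
      U (r₀ + y * Real.exp (-s), T₀ - Real.exp (-s)) := hw y s
  rw [hwss, hwsy, hweight, hws y s hmem, hwy y s hmem, hwval, abs_exp_mul_rpow hp]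
  have hsym := hsymm _ hmem
  have hUr : fderiv ℝ U (r₀ + y * Real.exp (-s), T₀ - Real.exp (-s)) (1, 0)
      = A (r₀ + y * Real.exp (-s), T₀ - Real.exp (-s)) := rfl
  have hUt : fderiv ℝ U (r₀ + y * Real.exp (-s), T₀ - Real.exp (-s)) (0, 1)
      = B (r₀ + y * Real.exp (-s), T₀ - Real.exp (-s)) := rfl
  rw [← mul_assoc (1 / rho p y), one_div_mul_cancel hrho, one_mul]
  simp only [Pi.mul_apply, Pi.sub_apply, id, hUr, hUt, hsym, hwave]
  -- Rewrite the rational coefficients as polynomials in `2 / (p - 1)`.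
  have hc1 : 2 * (p + 1) / (p - 1) ^ 2 = (2 / (p - 1)) ^ 2 + 2 / (p - 1) := by
    field_simp; ring
  have hc2 : (p + 3) / (p - 1) = 1 + 2 * (2 / (p - 1)) := by
    field_simp; ring
  rw [hc1, hc2]
  ring

end
end

section
/- Let T : [0,∞) → ℝ be 1-Lipschitz and let 0 ≤ r₁ < r₂. Then the following are equivalent: (a) every point r ∈ (r₁,r₂) is characteristic; (b) there exists r* ∈ [r₁,r₂] such that for all r ∈ [r₁,r₂], T(r) = T(r*) − |r − r*|. -/
/-!
A point `r₀` interior to `[r₁, r₂]` is non-characteristic as soon as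
`T r ≥ T r₀ - δ |r - r₀|` on `[r₁, r₂]` for some `δ < 1` (`nonChar_of_cone`).

If every interior point is characteristic, then at each `c ∈ [r₁, r₂]` one of the two Lipschitz
bounds `T c ≤ T r₁ + (c - r₁)`, `T c ≤ T r₂ + (r₂ - c)` is an equality: if both were strict, then
for `δ < 1` close to `1` the function `r ↦ T r + δ |r - c|` would be smaller at `c` than at both
endpoints, hence attain its minimum over `[r₁, r₂]` at an interior point, and that point would be
non-characteristic (`tent_le`). So `T` is the minimum of two lines of slopes `1` and `-1`, which
cross at `r*`. Conversely, on a tent the slope is exactly `1` going away from `r*`, which no cone of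
slope `δ < 1` allows.
-/


/- STATEMENT 11: Characterization of the interior of the set of characteristic
points. For T : [0,∞) → ℝ 1-Lipschitz and 0 ≤ r₁ < r₂, the following are
equivalent: (a) every r ∈ (r₁,r₂) is characteristic; (b) there is r* ∈ [r₁,r₂]
with T(r) = T(r*) - |r - r*| for all r ∈ [r₁,r₂]. -/

/-- `r₀` is a non-characteristic point for the blow-up curve `T`: there are
δ₀ ∈ (0,1) and t₀ < T(r₀) such that every point (r,t) with r ≥ 0,
t₀ ≤ t < T(r₀) - δ₀|r - r₀| lies below the blow-up curve. -/
def NonChar (T : ℝ → ℝ) (r₀ : ℝ) : Prop :=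
  ∃ δ₀ ∈ Set.Ioo (0 : ℝ) 1, ∃ t₀ < T r₀,
    ∀ r : ℝ, 0 ≤ r → ∀ t : ℝ, t₀ ≤ t → t < T r₀ - δ₀ * |r - r₀| → t < T r

theorem nonChar_of_cone {T : ℝ → ℝ} {r₁ r₂ r₀ δ : ℝ} (h₀ : r₀ ∈ Set.Ioo r₁ r₂)
    (hδ : δ ∈ Set.Ioo (0 : ℝ) 1)
    (h : ∀ r ∈ Set.Icc r₁ r₂, T r₀ - δ * |r - r₀| ≤ T r) : NonChar T r₀ := by
  obtain ⟨h1, h2⟩ := h₀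
  have hm : 0 < min (r₀ - r₁) (r₂ - r₀) := lt_min (by linarith) (by linarith)
  -- The cone truncated at this height `t₀` projects into `[r₁, r₂]`.
  refine ⟨δ, hδ, T r₀ - δ * min (r₀ - r₁) (r₂ - r₀), by nlinarith [mul_pos hδ.1 hm], ?_⟩
  intro r _ t ht ht'
  have hlt : |r - r₀| < min (r₀ - r₁) (r₂ - r₀) :=
    lt_of_mul_lt_mul_left (by linarith) hδ.1.le
  obtain ⟨hl, hr⟩ := lt_min_iff.1 hlt
  have := neg_abs_le (r - r₀)
  have := le_abs_self (r - r₀)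
  exact ht'.trans_le (h r ⟨by linarith, by linarith⟩)

theorem tent_le {T : ℝ → ℝ} {r₁ r₂ c : ℝ} (hT : ContinuousOn T (Set.Icc r₁ r₂))
    (hc : c ∈ Set.Icc r₁ r₂) (h : ∀ r ∈ Set.Ioo r₁ r₂, ¬ NonChar T r) :
    T r₁ + (c - r₁) ≤ T c ∨ T r₂ + (r₂ - c) ≤ T c := by
  by_contra! hcon
  obtain ⟨hc1, hc2⟩ := hcon
  have hδ : ∃ δ ∈ Set.Ioo (0 : ℝ) 1,
      T c < T r₁ + δ * (c - r₁) ∧ T c < T r₂ + δ * (r₂ - c) := by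
    have e1 : ∀ᶠ δ : ℝ in nhds 1, T c < T r₁ + δ * (c - r₁) :=
      ContinuousAt.eventually_lt continuousAt_const (by fun_prop) (by simpa using hc1)
    have e2 : ∀ᶠ δ : ℝ in nhds 1, T c < T r₂ + δ * (r₂ - c) :=
      ContinuousAt.eventually_lt continuousAt_const (by fun_prop) (by simpa using hc2)
    have e3 : ∀ᶠ δ : ℝ in nhdsWithin 1 (Set.Iio 1), δ ∈ Set.Ioo (0 : ℝ) 1 :=
      Ioo_mem_nhdsLT one_pos
    exact (e3.and (nhdsWithin_le_nhds (e1.and e2))).exists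
  obtain ⟨δ, hδ, hd1, hd2⟩ := hδ
  obtain ⟨r₀, hr₀, hmin⟩ := isCompact_Icc.exists_isMinOn (f := fun r => T r + δ * |r - c|)
    ⟨c, hc⟩ (hT.add (by fun_prop))
  have hmin' : ∀ r ∈ Set.Icc r₁ r₂, T r₀ + δ * |r₀ - c| ≤ T r + δ * |r - c| :=
    fun r hr => hmin hr
  have hmc := hmin' c hc
  rw [sub_self, abs_zero, mul_zero, add_zero] at hmc
  have hne1 : r₁ ≠ r₀ := by
    rintro rfl
    rw [abs_sub_comm, abs_of_nonneg (sub_nonneg.2 hc.1)] at hmc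
    linarith
  have hne2 : r₀ ≠ r₂ := by
    rintro rfl
    rw [abs_of_nonneg (sub_nonneg.2 hc.2)] at hmc
    linarith
  have hI : r₀ ∈ Set.Ioo r₁ r₂ := ⟨lt_of_le_of_ne hr₀.1 hne1, lt_of_le_of_ne hr₀.2 hne2⟩
  refine h r₀ hI (nonChar_of_cone hI hδ fun r hr => ?_)
  have := hmin' r hr
  have := mul_le_mul_of_nonneg_left (abs_sub_le r r₀ c) hδ.1.le
  linarith

theorem stmt11 (T : ℝ → ℝ) (hT : LipschitzOnWith 1 T (Set.Ici 0))
    (r₁ r₂ : ℝ) (hr₁ : 0 ≤ r₁) (hr₁₂ : r₁ < r₂) :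
    (∀ r ∈ Set.Ioo r₁ r₂, ¬ NonChar T r) ↔
      (∃ rs ∈ Set.Icc r₁ r₂, ∀ r ∈ Set.Icc r₁ r₂, T r = T rs - |r - rs|) := by
  have hL : ∀ x y : ℝ, 0 ≤ x → 0 ≤ y → |T x - T y| ≤ |x - y| := fun x y hx hy => by
    simpa [Real.dist_eq] using hT.dist_le_mul x hx y hy
  have hup : ∀ x y : ℝ, 0 ≤ x → x ≤ y → T x - T y ≤ y - x ∧ T y - T x ≤ y - x := by
    intro x y hx hxy
    have := hL x y hx (hx.trans hxy)
    rw [abs_sub_comm x y, abs_of_nonneg (sub_nonneg.2 hxy), abs_le] at this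
    constructor <;> linarith
  constructor
  · intro h
    have h12 := hup r₁ r₂ hr₁ hr₁₂.le
    -- The lines of slope `1` through `(r₁, T r₁)` and of slope `-1` through `(r₂, T r₂)` cross
    -- at abscissa `rs`.
    obtain ⟨rs, hrs⟩ : ∃ rs, rs = (T r₂ + r₂ - T r₁ + r₁) / 2 := ⟨_, rfl⟩
    have key : ∀ r ∈ Set.Icc r₁ r₂, T r = T r₁ + (rs - r₁) - |r - rs| := by
      intro r hr
      have hcont : ContinuousOn T (Set.Icc r₁ r₂) :=
        hT.continuousOn.mono fun x hx => hr₁.trans hx.1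
      have u1 := (hup r₁ r hr₁ hr.1).2
      have u2 := (hup r r₂ (hr₁.trans hr.1) hr.2).1
      have hlow := tent_le hcont hr h
      rcases abs_cases (r - rs) with ⟨e, _⟩ | ⟨e, _⟩ <;> rw [e] <;>
        rcases hlow with hl | hl <;> linarith
    have hmem : rs ∈ Set.Icc r₁ r₂ := ⟨by linarith, by linarith⟩
    have hTs : T rs = T r₁ + (rs - r₁) := by simpa using key rs hmem
    exact ⟨rs, hmem, fun r hr => by rw [hTs]; exact key r hr⟩
  · rintro ⟨rs, _, htent⟩ r ⟨h1, h2⟩ ⟨δ, ⟨_, hδ1⟩, t₀, ht₀, hcone⟩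
    have hTr := htent r ⟨h1.le, h2.le⟩
    -- At a nearby point `r'` on the side of `r` away from `rs`, the graph point `(r', T r')`
    -- would lie in the cone, hence strictly below the graph.
    have hstep : ∃ r' ∈ Set.Icc r₁ r₂, r' ≠ r ∧ T r' = T r - |r' - r| ∧ |r' - r| ≤ T r - t₀ := by
      rcases le_total rs r with hle | hle
      · have hε : 0 < min (r₂ - r) (T r - t₀) := lt_min (by linarith) (by linarith)
        have ha := min_le_left (r₂ - r) (T r - t₀)
        have hb := min_le_right (r₂ - r) (T r - t₀)
        generalize min (r₂ - r) (T r - t₀) = ε at *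
        have hm : r + ε ∈ Set.Icc r₁ r₂ := ⟨by linarith, by linarith⟩
        have hlt : r < r + ε := by linarith
        refine ⟨r + ε, hm, hlt.ne', ?_, ?_⟩
        · rw [htent _ hm, hTr, abs_of_nonneg (by linarith : 0 ≤ r + ε - rs),
            abs_of_nonneg (by linarith : 0 ≤ r - rs), abs_of_nonneg (by linarith : 0 ≤ r + ε - r)]
          ring
        · rw [abs_of_nonneg (by linarith : 0 ≤ r + ε - r)]
          linarith
      · have hε : 0 < min (r - r₁) (T r - t₀) := lt_min (by linarith) (by linarith)
        have ha := min_le_left (r - r₁) (T r - t₀)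
        have hb := min_le_right (r - r₁) (T r - t₀)
        generalize min (r - r₁) (T r - t₀) = ε at *
        have hm : r - ε ∈ Set.Icc r₁ r₂ := ⟨by linarith, by linarith⟩
        have hlt : r - ε < r := by linarith
        refine ⟨r - ε, hm, hlt.ne, ?_, ?_⟩
        · rw [htent _ hm, hTr, abs_of_nonpos (by linarith : r - ε - rs ≤ 0),
            abs_of_nonpos (by linarith : r - rs ≤ 0), abs_of_nonpos (by linarith : r - ε - r ≤ 0)]
          ring
        · rw [abs_of_nonpos (by linarith : r - ε - r ≤ 0)]
          linarith
    obtain ⟨r', hm, hne, hT', hle⟩ := hstep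
    have hpos : 0 < |r' - r| := abs_pos.2 (sub_ne_zero.2 hne)
    exact lt_irrefl _ (hcone r' (hr₁.trans hm.1) (T r') (by linarith) (by nlinarith))
end

section
/- Let p > 1, b > 0 and δ ∈ (0, 1/2). There exists a constant C(δ,p) > 0 such that the following holds. Let u : (0,∞) × ℝ → ℝ, let w₀ and w_b be its self-similar transforms centered at (0,0) and (b,b) respectively, let s′ satisfy 0 < b·e^{s′} < 1, and set s = s′ − log(1 − b·e^{s′}). If ∫_{δ}^{1−δ} |w₀(y,s)|^{p+1} dy ≥ ε for some ε > 0, then ∫_{−1}^{1} |w_b(y′,s′)|^{p+1}·ρ(y′) dy′ ≥ (ε/C(δ,p))·(1 − b·e^{s′})^{−(p+1)/(p−1)}. In particular, if b·e^{s′_n} → 1 along a sequence while the slab integrals of w₀ stay bounded below by ε > 0, then ∫_{−1}^{1}|w_b(y′,s′_n)|^{p+1} ρ dy′ → ∞. -/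
/-!
At corresponding times, `w₀` and `w_b` read the same slice of `u`. With `θ = 1 - b e^{s'}` and
`s = s' - log θ` one has `e^{-s} = θ e^{-s'} = e^{-s'} - b`, so both sample `u` at time `-e^{-s}`,
and the space points agree when `y' = θ (1 + y) - 1`. This gives
`w₀(y, s) = θ^{2/(p-1)} w_b(y', s')` (`w₀_eq_wb`).

The affine map `y ↦ θ (1 + y) - 1` sends `(δ, 1 - δ)` into `(-1, 1)`, has derivative `θ`, and on its
image `1 - y'² = θ (1 + y) (2 - θ (1 + y)) ≥ θ δ`, hence `ρ(y') ≥ (θ δ)^{2/(p-1)}`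
(`rho_lower_bound`). The powers of `θ` combine to
`-2(p+1)/(p-1) + 1 + 2/(p-1) = -(p+1)/(p-1)`, which is the bound of the theorem with
`C = δ^{-2/(p-1)}` (`slab_lower_bound`). The blow-up follows because this power is negative and
`θ → 0⁺`. No measurability of `u` is needed: the change of variables, monotonicity, and pulling out
a finite constant all hold for the lower integral `∫⁻` of arbitrary functions.
-/

/- STATEMENT 15: There is C(δ,p) > 0 such that if the slab integral
∫_δ^{1-δ} |w₀(y,s)|^{p+1} dy is at least ε (with s = s' - log(1 - b e^{s'})),
then ∫_{-1}^1 |w_b(y',s')|^{p+1} ρ(y') dy' ≥ (ε/C)(1 - b e^{s'})^{-(p+1)/(p-1)}.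
In particular, if b e^{s'_n} → 1 while the slab integrals stay ≥ ε > 0, then
∫_{-1}^1 |w_b(·,s'_n)|^{p+1} ρ → ∞. -/

open MeasureTheory Filter

noncomputable section

/-- w₀ is the self-similar transform of u centered at (0,0). -/
def IsW₀ (p : ℝ) (u w₀ : ℝ → ℝ → ℝ) : Prop :=
  ∀ y s : ℝ, w₀ y s = Real.exp (-2 * s / (p - 1)) * u (y * Real.exp (-s)) (-Real.exp (-s))

/-- w_b is the self-similar transform of u centered at (b,b). -/
def IsWb (p b : ℝ) (u wb : ℝ → ℝ → ℝ) : Prop :=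
  ∀ y' s' : ℝ, wb y' s' = Real.exp (-2 * s' / (p - 1)) *
    u (b + y' * Real.exp (-s')) (b - Real.exp (-s'))

/-- Both transforms sample `u` at the same point when `y' = θ (1 + y) - 1`, `θ = 1 - b e^{s'}`. -/
theorem w₀_eq_wb {p b s' : ℝ} {u w₀ wb : ℝ → ℝ → ℝ} (h₀ : IsW₀ p u w₀) (hb : IsWb p b u wb)
    (hθ : 0 < 1 - b * Real.exp s') (y : ℝ) :
    w₀ y (s' - Real.log (1 - b * Real.exp s')) =
      (1 - b * Real.exp s') ^ (2 / (p - 1)) * wb ((1 - b * Real.exp s') * (1 + y) - 1) s' := by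
  have hee : Real.exp s' * Real.exp (-s') = 1 := by rw [← Real.exp_add]; simp
  have hexp : Real.exp (-(s' - Real.log (1 - b * Real.exp s')))
      = (1 - b * Real.exp s') * Real.exp (-s') := by
    rw [show -(s' - Real.log (1 - b * Real.exp s')) = Real.log (1 - b * Real.exp s') + -s' by ring,
      Real.exp_add, Real.exp_log hθ]
  have hpow : Real.exp (-2 * (s' - Real.log (1 - b * Real.exp s')) / (p - 1))
      = (1 - b * Real.exp s') ^ (2 / (p - 1)) * Real.exp (-2 * s' / (p - 1)) := by
    rw [Real.rpow_def_of_pos hθ, ← Real.exp_add]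
    congr 1
    ring
  have hx : y * ((1 - b * Real.exp s') * Real.exp (-s'))
      = b + ((1 - b * Real.exp s') * (1 + y) - 1) * Real.exp (-s') := by
    linear_combination b * hee
  have ht : -((1 - b * Real.exp s') * Real.exp (-s')) = b - Real.exp (-s') := by
    linear_combination b * hee
  rw [h₀, hb, hexp, hpow, hx, ht, mul_assoc]

theorem rho_lower_bound {p δ θ y : ℝ} (hp : 1 < p) (hδ : 0 < δ) (hθ : 0 < θ) (hθ1 : θ < 1)
    (hy : y ∈ Set.Ioo δ (1 - δ)) :
    θ ^ (2 / (p - 1)) * δ ^ (2 / (p - 1)) ≤ rho p (θ * (1 + y) - 1) := by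
  have hq : 0 ≤ 2 / (p - 1) := div_nonneg zero_le_two (by linarith)
  obtain ⟨hy1, hy2⟩ := hy
  rw [← Real.mul_rpow hθ.le hδ.le, rho]
  apply Real.rpow_le_rpow (by positivity) _ hq
  have h1 : δ ≤ 2 - θ * (1 + y) := by nlinarith
  have h2 : δ ≤ (1 + y) * (2 - θ * (1 + y)) := by nlinarith
  nlinarith [mul_le_mul_of_nonneg_left h2 hθ.le]

/-- The integral estimate, with `C = δ^{-2/(p-1)}`. -/
theorem slab_lower_bound {p δ b s' ε : ℝ} (hp : 1 < p) (hδ : 0 < δ)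
    {u w₀ wb : ℝ → ℝ → ℝ} (h₀ : IsW₀ p u w₀) (hb : IsWb p b u wb)
    (hβ : 0 < b * Real.exp s') (hβ1 : b * Real.exp s' < 1)
    (h : ENNReal.ofReal ε ≤ ∫⁻ y in Set.Ioo δ (1 - δ),
      ENNReal.ofReal (|w₀ y (s' - Real.log (1 - b * Real.exp s'))| ^ (p + 1))) :
    ENNReal.ofReal ((ε / (δ ^ (2 / (p - 1)))⁻¹) * (1 - b * Real.exp s') ^ (-(p + 1) / (p - 1)))
      ≤ ∫⁻ y' in Set.Ioo (-1 : ℝ) 1, ENNReal.ofReal (|wb y' s'| ^ (p + 1) * rho p y') := by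
  have hθ : 0 < 1 - b * Real.exp s' := by linarith
  have hw := w₀_eq_wb h₀ hb hθ
  set θ := 1 - b * Real.exp s' with hθdef
  have hθ1 : θ < 1 := by linarith
  have hp1 : p - 1 ≠ 0 := by linarith
  have hk : 0 ≤ δ ^ (2 / (p - 1)) * θ ^ (-(p + 1) / (p - 1)) := by positivity
  have hexpo : θ ^ (-(p + 1) / (p - 1)) * (θ ^ (2 / (p - 1))) ^ (p + 1)
      = θ * θ ^ (2 / (p - 1)) := by
    rw [← Real.rpow_mul hθ.le, ← Real.rpow_add hθ]
    nth_rewrite 2 [← Real.rpow_one θ]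
    rw [← Real.rpow_add hθ]
    congr 1
    field_simp
    ring
  have hsub : (fun y => θ * (1 + y) - 1) '' Set.Ioo δ (1 - δ) ⊆ Set.Ioo (-1) 1 := by
    rintro _ ⟨y, ⟨hy1, hy2⟩, rfl⟩
    constructor <;> dsimp only <;> nlinarith
  calc ENNReal.ofReal ((ε / (δ ^ (2 / (p - 1)))⁻¹) * θ ^ (-(p + 1) / (p - 1)))
      = ENNReal.ofReal (δ ^ (2 / (p - 1)) * θ ^ (-(p + 1) / (p - 1))) * ENNReal.ofReal ε := by
        rw [← ENNReal.ofReal_mul hk, div_inv_eq_mul]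
        congr 1
        ring
    _ ≤ ENNReal.ofReal (δ ^ (2 / (p - 1)) * θ ^ (-(p + 1) / (p - 1))) *
          ∫⁻ y in Set.Ioo δ (1 - δ), ENNReal.ofReal (|w₀ y (s' - Real.log θ)| ^ (p + 1)) := by
        gcongr
    _ = ∫⁻ y in Set.Ioo δ (1 - δ),
          ENNReal.ofReal (δ ^ (2 / (p - 1)) * θ ^ (-(p + 1) / (p - 1))) *
            ENNReal.ofReal (|w₀ y (s' - Real.log θ)| ^ (p + 1)) :=
        (lintegral_const_mul' _ _ ENNReal.ofReal_ne_top).symm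
    _ ≤ ∫⁻ y in Set.Ioo δ (1 - δ), ENNReal.ofReal |θ| *
          ENNReal.ofReal (|wb (θ * (1 + y) - 1) s'| ^ (p + 1) * rho p (θ * (1 + y) - 1)) := by
        refine setLIntegral_mono' measurableSet_Ioo fun y hy => ?_
        rw [← ENNReal.ofReal_mul hk, ← ENNReal.ofReal_mul (abs_nonneg _), abs_of_pos hθ, hw y,
          abs_mul, abs_of_pos (Real.rpow_pos_of_pos hθ _),
          Real.mul_rpow (by positivity) (abs_nonneg _)]
        apply ENNReal.ofReal_le_ofReal
        have hr := rho_lower_bound hp hδ hθ hθ1 hy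
        calc _ = δ ^ (2 / (p - 1)) * (θ ^ (-(p + 1) / (p - 1)) * (θ ^ (2 / (p - 1))) ^ (p + 1)) *
              |wb (θ * (1 + y) - 1) s'| ^ (p + 1) := by ring
          _ = θ * (|wb (θ * (1 + y) - 1) s'| ^ (p + 1) *
              (θ ^ (2 / (p - 1)) * δ ^ (2 / (p - 1)))) := by rw [hexpo]; ring
          _ ≤ _ := by gcongr
    _ = ∫⁻ y' in (fun y => θ * (1 + y) - 1) '' Set.Ioo δ (1 - δ),
          ENNReal.ofReal (|wb y' s'| ^ (p + 1) * rho p y') := by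
        refine (lintegral_image_eq_lintegral_abs_deriv_mul (f := fun y => θ * (1 + y) - 1)
          (f' := fun _ => θ) measurableSet_Ioo (fun x _ => ?_) (fun x _ y _ hxy => ?_)
          (fun y' => ENNReal.ofReal (|wb y' s'| ^ (p + 1) * rho p y'))).symm
        · simpa using ((((hasDerivAt_id x).const_add 1).const_mul θ).sub_const 1).hasDerivWithinAt
        · have : θ * (1 + x) = θ * (1 + y) := by simpa using hxy
          linarith [mul_left_cancel₀ hθ.ne' this]
    _ ≤ _ := lintegral_mono_set hsub

theorem stmt15 (p : ℝ) (hp : 1 < p) (δ : ℝ) (hδ : δ ∈ Set.Ioo (0 : ℝ) (1 / 2)) :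
    ∃ C : ℝ, 0 < C ∧
      (∀ b : ℝ, 0 < b → ∀ u w₀ wb : ℝ → ℝ → ℝ, IsW₀ p u w₀ → IsWb p b u wb →
        ∀ s' : ℝ, 0 < b * Real.exp s' → b * Real.exp s' < 1 →
          ∀ ε : ℝ, 0 < ε →
            ENNReal.ofReal ε ≤
              ∫⁻ y in Set.Ioo δ (1 - δ),
                ENNReal.ofReal
                  (|w₀ y (s' - Real.log (1 - b * Real.exp s'))| ^ (p + 1)) →
            ENNReal.ofReal
                ((ε / C) * (1 - b * Real.exp s') ^ (-(p + 1) / (p - 1)))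
              ≤ ∫⁻ y' in Set.Ioo (-1 : ℝ) 1,
                  ENNReal.ofReal (|wb y' s'| ^ (p + 1) * rho p y')) ∧
      (∀ b : ℝ, 0 < b → ∀ u w₀ wb : ℝ → ℝ → ℝ, IsW₀ p u w₀ → IsWb p b u wb →
        ∀ sn : ℕ → ℝ, (∀ n, 0 < b * Real.exp (sn n) ∧ b * Real.exp (sn n) < 1) →
          Tendsto (fun n => b * Real.exp (sn n)) atTop (nhds 1) →
          ∀ ε : ℝ, 0 < ε →
            (∀ n, ENNReal.ofReal ε ≤
              ∫⁻ y in Set.Ioo δ (1 - δ),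
                ENNReal.ofReal
                  (|w₀ y (sn n - Real.log (1 - b * Real.exp (sn n)))| ^ (p + 1))) →
            Tendsto
              (fun n => ∫⁻ y' in Set.Ioo (-1 : ℝ) 1,
                ENNReal.ofReal (|wb y' (sn n)| ^ (p + 1) * rho p y'))
              atTop (nhds ⊤)) := by
  have hC : 0 < (δ ^ (2 / (p - 1)))⁻¹ := inv_pos.2 (Real.rpow_pos_of_pos hδ.1 _)
  refine ⟨(δ ^ (2 / (p - 1)))⁻¹, hC, ?_, ?_⟩
  · intro b _ u w₀ wb h₀ hb s' hβ hβ1 ε _ h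
    exact slab_lower_bound hp hδ.1 h₀ hb hβ hβ1 h
  · intro b _ u w₀ wb h₀ hb sn hsn hlim ε hε h
    refine tendsto_nhds_top_mono' ?_
      (fun n => slab_lower_bound hp hδ.1 h₀ hb (hsn n).1 (hsn n).2 (h n))
    refine ENNReal.tendsto_ofReal_atTop.comp (Tendsto.const_mul_atTop (div_pos hε hC) ?_)
    have hneg : -(p + 1) / (p - 1) < 0 := div_neg_of_neg_of_pos (by linarith) (by linarith)
    refine (tendsto_rpow_neg_nhdsGT_zero hneg).comp (tendsto_nhdsWithin_iff.2 ⟨?_, ?_⟩)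
    · simpa using hlim.const_sub 1
    · exact Eventually.of_forall fun n => sub_pos.2 (hsn n).2
end
end

section
/- Let p > 1, N ≥ 1 an integer, τ₀ ∈ (0,1), and let v be a C² function on the closed cone section K = {(r,τ) : 0 ≤ τ ≤ τ₀, 0 ≤ r ≤ 1−τ} satisfying ∂_τ²v = ∂ᵣ²v + ((N−1)/r)·∂ᵣv + |v|^{p−1}v for 0 < r < 1−τ, 0 < τ < τ₀, together with ∂ᵣv(0,τ) = 0 for all τ ∈ [0,τ₀]. Define the local energy E(τ) = ∫₀^{1−τ} [ (1/2)(∂_τ v)² + (1/2)(∂ᵣ v)² − (1/(p+1))|v|^{p+1} ]·r^{N−1} dr. Then for every τ ∈ (0,τ₀), E is differentiable and E′(τ) = −(1/2)·(1−τ)^{N−1}·(∂_τ v − ∂ᵣ v)²(1−τ, τ) + (1/(p+1))·(1−τ)^{N−1}·|v(1−τ,τ)|^{p+1}; in particular E(τ₀) ≤ E(0) + (1/(p+1))·∫₀^{τ₀} (1−τ)^{N−1}·|v(1−τ,τ)|^{p+1} dτ. -/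
/-!
Let `e = (½ v_τ² + ½ v_r² - |v|^{p+1}/(p+1)) r^{N-1}` be the energy density and
`m = v_r v_τ r^{N-1}` the momentum. Multiplying the equation by `v_τ r^{N-1}` and using
`v_{rτ} = v_{τr}` gives the conservation law `∂_τ e = ∂_r m` inside the cone (`conservation_law`).

The substitution `r = (1 - τ) x` turns the energy into
`E(τ) = ∫₀¹ (1 - τ) e((1 - τ) x, τ) dx`, over a fixed interval, with a `C¹` integrand since `v` is
`C²` near the closed cone section and `|·|^{p+1}` is `C¹`. By the conservation law the
`τ`-derivative of the integrand is the `x`-derivative of `m - x e`, evaluated at `((1 - τ) x, τ)`, so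
`E'(τ) = (m - e)(1 - τ, τ) - m(0, τ)` (`hasDerivAt_cone_integral`). The Neumann condition kills
`m(0, τ)`, and completing the square in `m - e` gives the stated formula. Dropping the nonpositive
square and integrating over `[0, τ₀]`, where `E` is continuous, yields the inequality.
-/
open Set MeasureTheory

/-- Differentiation under the integral sign over `[0, 1]` for an integrand that is `C¹` on an open
set containing the segment `[0, 1] × {t}`; compactness of the segment supplies the uniform bound. -/
lemma hasDerivAt_integral_of_contDiffOn {V : Set (ℝ × ℝ)} (hV : IsOpen V) {G : ℝ × ℝ → ℝ}
    (hG : ContDiffOn ℝ 1 G V) {t : ℝ} (ht : ∀ x ∈ Icc (0 : ℝ) 1, (x, t) ∈ V) :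
    IntervalIntegrable (fun x => fderiv ℝ G (x, t) (0, 1)) volume 0 1 ∧
    HasDerivAt (fun s => ∫ x in (0 : ℝ)..1, G (x, s))
      (∫ x in (0 : ℝ)..1, fderiv ℝ G (x, t) (0, 1)) t := by
  obtain ⟨A, W, -, hW, hA, htW, hAW⟩ := generalized_tube_lemma
    (isCompact_Icc (a := (0 : ℝ)) (b := 1)) (isCompact_singleton (x := t)) hV
    (by rintro ⟨x, s⟩ ⟨hx, hs⟩; obtain rfl : s = t := hs; exact ht x hx)
  obtain ⟨δ, hδ, hball⟩ := Metric.nhds_basis_closedBall.mem_iff.1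
    (hW.mem_nhds (htW rfl))
  have hsub : Icc (0 : ℝ) 1 ×ˢ Metric.closedBall t δ ⊆ V :=
    fun q hq => hAW ⟨hA hq.1, hball hq.2⟩
  have hG' : ContinuousOn (fun q => fderiv ℝ G q (0, 1)) V :=
    (hG.continuousOn_fderiv_of_isOpen hV le_rfl).clm_apply continuousOn_const
  obtain ⟨C, hC⟩ := (isCompact_Icc.prod (isCompact_closedBall t δ)).exists_bound_of_continuousOn
    (hG'.mono hsub)
  have slice : ∀ {F : ℝ × ℝ → ℝ}, ContinuousOn F V → ∀ s ∈ Metric.closedBall t δ,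
      ContinuousOn (fun x => F (x, s)) (Icc 0 1) := fun hF s hs =>
    hF.comp (by fun_prop) (fun x hx => hsub ⟨hx, hs⟩)
  have hIoc : uIoc (0 : ℝ) 1 ⊆ Icc 0 1 := by
    rw [uIoc_of_le zero_le_one]; exact Ioc_subset_Icc_self
  have meas : ∀ {F : ℝ × ℝ → ℝ}, ContinuousOn F V → ∀ s ∈ Metric.closedBall t δ,
      AEStronglyMeasurable (fun x => F (x, s)) (volume.restrict (uIoc 0 1)) := fun hF s hs =>
    ((slice hF s hs).mono hIoc).aestronglyMeasurable measurableSet_uIoc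
  have htt : t ∈ Metric.closedBall t δ := Metric.mem_closedBall_self hδ.le
  refine intervalIntegral.hasDerivAt_integral_of_dominated_loc_of_deriv_le
    (F := fun s x => G (x, s)) (F' := fun s x => fderiv ℝ G (x, s) (0, 1))
    (bound := fun _ => C) (s := Metric.closedBall t δ)
    (Metric.closedBall_mem_nhds t hδ) ?_ ?_ ?_ ?_ ?_ ?_
  · filter_upwards [Metric.closedBall_mem_nhds t hδ] with s hs using meas hG.continuousOn s hs
  · exact (slice hG.continuousOn t htt).intervalIntegrable_of_Icc zero_le_one
  · exact meas hG' t htt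
  · exact Filter.Eventually.of_forall fun x hx s hs => hC (x, s) ⟨hIoc hx, hs⟩
  · exact intervalIntegrable_const
  · refine Filter.Eventually.of_forall fun x hx s hs => ?_
    have h1 : HasFDerivAt G (fderiv ℝ G (x, s)) (x, s) :=
      ((hG.contDiffAt (hV.mem_nhds (hsub ⟨hIoc hx, hs⟩))).differentiableAt one_ne_zero).hasFDerivAt
    exact h1.comp_hasDerivAt s ((hasDerivAt_const s x).prodMk (hasDerivAt_id s))

/-- The map `(x, s) ↦ ((1 - s) x, s)`, which carries `[0, 1] × {s}` onto the slice
`0 ≤ r ≤ 1 - s` of the cone at time `s`. -/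
def coneMap (q : ℝ × ℝ) : ℝ × ℝ := ((1 - q.2) * q.1, q.2)

/-- Conservation law on a shrinking slice: if `∂_τ e = ∂_r m` inside the cone, then
`∫₀^{1-τ} e dr` (written with the substitution `r = (1 - τ) x`) changes at the rate
`m (1-τ, τ) - m (0, τ) - e (1-τ, τ)`. Differentiability alone does not
need the conservation law; it gives continuity of the energy at the endpoint times. -/
lemma hasDerivAt_cone_integral {U : Set (ℝ × ℝ)} (hU : IsOpen U) {e m : ℝ × ℝ → ℝ}
    (he : ContDiffOn ℝ 1 e U) (hm : ContDiffOn ℝ 1 m U) {τ : ℝ}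
    (hτ : ∀ x ∈ Icc (0 : ℝ) 1, coneMap (x, τ) ∈ U) :
    DifferentiableAt ℝ (fun s => ∫ x in (0 : ℝ)..1, (1 - s) * e (coneMap (x, s))) τ ∧
    ((∀ x ∈ Ioo (0 : ℝ) 1,
        fderiv ℝ e (coneMap (x, τ)) (0, 1) = fderiv ℝ m (coneMap (x, τ)) (1, 0)) →
      HasDerivAt (fun s => ∫ x in (0 : ℝ)..1, (1 - s) * e (coneMap (x, s)))
        (m (1 - τ, τ) - m (0, τ) - e (1 - τ, τ)) τ) := by
  have hcs : ContDiff ℝ 1 coneMap := by unfold coneMap; fun_prop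
  have hVo : IsOpen (coneMap ⁻¹' U) := hU.preimage hcs.continuous
  have hG : ContDiffOn ℝ 1 (fun q : ℝ × ℝ => (1 - q.2) * e (coneMap q)) (coneMap ⁻¹' U) :=
    ContDiffOn.mul (by fun_prop) (he.comp hcs.contDiffOn (fun _ h => h))
  obtain ⟨hint, hder⟩ := hasDerivAt_integral_of_contDiffOn hVo hG hτ
  refine ⟨hder.differentiableAt, fun hcl => ?_⟩
  have fd : ∀ {f : ℝ × ℝ → ℝ}, ContDiffOn ℝ 1 f U → ∀ x ∈ Icc (0 : ℝ) 1,
      HasFDerivAt f (fderiv ℝ f (coneMap (x, τ))) (coneMap (x, τ)) := fun hf x hx =>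
    ((hf.contDiffAt (hU.mem_nhds (hτ x hx))).differentiableAt one_ne_zero).hasFDerivAt
  have dx : ∀ {f : ℝ × ℝ → ℝ}, ContDiffOn ℝ 1 f U → ∀ x ∈ Icc (0 : ℝ) 1,
      HasDerivAt (fun y => f (coneMap (y, τ)))
        ((1 - τ) * fderiv ℝ f (coneMap (x, τ)) (1, 0)) x := by
    intro f hf x hx
    have h1 : HasDerivAt (fun y => coneMap (y, τ)) (1 - τ, 0) x := by
      have := ((hasDerivAt_id x).const_mul (1 - τ)).prodMk (hasDerivAt_const x τ)
      simpa [coneMap] using this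
    have h2 := (fd hf x hx).comp_hasDerivAt x h1
    have h3 : ((1 - τ, 0) : ℝ × ℝ) = (1 - τ) • (1, 0) := by simp
    rw [h3, map_smul] at h2
    exact h2
  have key : ∫ x in (0 : ℝ)..1,
      fderiv ℝ (fun q : ℝ × ℝ => (1 - q.2) * e (coneMap q)) (x, τ) (0, 1)
      = (m (coneMap (1, τ)) - 1 * e (coneMap (1, τ)))
        - (m (coneMap (0, τ)) - 0 * e (coneMap (0, τ))) := by
    refine intervalIntegral.integral_eq_sub_of_hasDerivAt_of_le
      (f := fun x => m (coneMap (x, τ)) - x * e (coneMap (x, τ))) zero_le_one ?_ ?_ hint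
    · intro x hx
      exact ((dx hm x hx).sub ((hasDerivAt_id x).mul (dx he x hx))).continuousAt.continuousWithinAt
    · intro x hx
      have hx' := Ioo_subset_Icc_self hx
      have h1 := (dx hm x hx').sub ((hasDerivAt_id x).mul (dx he x hx'))
      have hs : HasDerivAt (fun s => coneMap (x, s)) (-x, 1) τ := by
        have := (((hasDerivAt_id τ).const_sub 1).mul_const x).prodMk (hasDerivAt_id τ)
        simpa [coneMap] using this
      have h2 := ((hasDerivAt_id τ).const_sub 1).mul ((fd he x hx').comp_hasDerivAt (f := fun s => coneMap (x, s)) τ hs)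
      have h3 : HasDerivAt (fun s => (1 - s) * e (coneMap (x, s)))
          (fderiv ℝ (fun q : ℝ × ℝ => (1 - q.2) * e (coneMap q)) (x, τ) (0, 1)) τ :=
        (((hG.contDiffAt (hVo.mem_nhds (hτ x hx'))).differentiableAt
          one_ne_zero).hasFDerivAt).comp_hasDerivAt τ
            ((hasDerivAt_const τ x).prodMk (hasDerivAt_id τ))
      have h4 : ((-x, 1) : ℝ × ℝ) = (-x) • (1, 0) + (0, 1) := by simp
      rw [h4, map_add, map_smul, hcl x hx] at h2
      rw [h3.unique h2]
      refine h1.congr_deriv ?_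
      simp only [id, smul_eq_mul, Function.comp]
      ring
  rw [key] at hder
  refine hder.congr_deriv ?_
  simp [coneMap]
  ring

/-- Partial derivatives as directional values of the Fréchet derivative. -/
lemma hasDerivAt_slices {f : ℝ × ℝ → ℝ} {r τ : ℝ} (hf : DifferentiableAt ℝ f (r, τ)) :
    HasDerivAt (fun z => f (z, τ)) (fderiv ℝ f (r, τ) (1, 0)) r ∧
    HasDerivAt (fun σ => f (r, σ)) (fderiv ℝ f (r, τ) (0, 1)) τ :=
  ⟨hf.hasFDerivAt.comp_hasDerivAt r ((hasDerivAt_id r).prodMk (hasDerivAt_const r τ)),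
   hf.hasFDerivAt.comp_hasDerivAt τ ((hasDerivAt_const τ r).prodMk (hasDerivAt_id τ))⟩

/-- The weighted energy density `(½ v_τ² + ½ v_r² - |v|^{p+1}/(p+1)) r^{N-1}`, where
`w (r, τ) = v r τ`. -/
noncomputable def energyDensity (p : ℝ) (N : ℕ) (w : ℝ × ℝ → ℝ) (q : ℝ × ℝ) : ℝ :=
  ((1 / 2) * fderiv ℝ w q (0, 1) ^ 2 + (1 / 2) * fderiv ℝ w q (1, 0) ^ 2
    - (1 / (p + 1)) * |w q| ^ (p + 1)) * q.1 ^ (N - 1)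

/-- The weighted momentum `v_r v_τ r^{N-1}`, whose radial derivative is the time derivative of
`energyDensity` along solutions. -/
noncomputable def momentum (N : ℕ) (w : ℝ × ℝ → ℝ) (q : ℝ × ℝ) : ℝ :=
  fderiv ℝ w q (1, 0) * fderiv ℝ w q (0, 1) * q.1 ^ (N - 1)

lemma contDiffOn_partial {U : Set (ℝ × ℝ)} (hU : IsOpen U) {w : ℝ × ℝ → ℝ}
    (hw : ContDiffOn ℝ 2 w U) (d : ℝ × ℝ) : ContDiffOn ℝ 1 (fun q => fderiv ℝ w q d) U :=
  (hw.fderiv_of_isOpen hU (by norm_num [one_add_one_eq_two])).clm_apply contDiffOn_const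

lemma contDiffOn_energyDensity {p : ℝ} (hp : 1 < p) (N : ℕ) {U : Set (ℝ × ℝ)} (hU : IsOpen U)
    {w : ℝ × ℝ → ℝ} (hw : ContDiffOn ℝ 2 w U) : ContDiffOn ℝ 1 (energyDensity p N w) U := by
  have h1 := contDiffOn_partial hU hw (1, 0)
  have h2 := contDiffOn_partial hU hw (0, 1)
  have h3 : ContDiffOn ℝ 1 (fun q => |w q| ^ (p + 1)) U :=
    (contDiff_norm_rpow (E := ℝ) (p := p + 1) (by linarith)).comp_contDiffOn
      (hw.of_le one_le_two)
  unfold energyDensity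
  fun_prop

lemma contDiffOn_momentum (N : ℕ) {U : Set (ℝ × ℝ)} (hU : IsOpen U)
    {w : ℝ × ℝ → ℝ} (hw : ContDiffOn ℝ 2 w U) : ContDiffOn ℝ 1 (momentum N w) U := by
  have h1 := contDiffOn_partial hU hw (1, 0)
  have h2 := contDiffOn_partial hU hw (0, 1)
  unfold momentum
  fun_prop

/-- The local conservation law `∂_τ e = ∂_r m` at a point `r > 0` where the radial equation holds;
it combines the equation with the symmetry of the second derivative. -/
lemma conservation_law {p : ℝ} (hp : 1 < p) {N : ℕ} (hN : 1 ≤ N) {U : Set (ℝ × ℝ)}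
    (hU : IsOpen U) {w : ℝ × ℝ → ℝ} (hw : ContDiffOn ℝ 2 w U) {r τ : ℝ} (hr : 0 < r)
    (hq : (r, τ) ∈ U)
    (heq : fderiv ℝ (fun q => fderiv ℝ w q (0, 1)) (r, τ) (0, 1) =
      fderiv ℝ (fun q => fderiv ℝ w q (1, 0)) (r, τ) (1, 0)
        + ((N : ℝ) - 1) / r * fderiv ℝ w (r, τ) (1, 0) + |w (r, τ)| ^ (p - 1) * w (r, τ)) :
    fderiv ℝ (energyDensity p N w) (r, τ) (0, 1) = fderiv ℝ (momentum N w) (r, τ) (1, 0) := by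
  have hn := hU.mem_nhds hq
  have diff : ∀ {f : ℝ × ℝ → ℝ}, ContDiffOn ℝ 1 f U → DifferentiableAt ℝ f (r, τ) := fun hf =>
    (hf.contDiffAt hn).differentiableAt one_ne_zero
  obtain ⟨Pr, Pt⟩ := hasDerivAt_slices (diff (contDiffOn_partial hU hw (1, 0)))
  obtain ⟨Qr, Qt⟩ := hasDerivAt_slices (diff (contDiffOn_partial hU hw (0, 1)))
  obtain ⟨-, wt⟩ := hasDerivAt_slices (diff (hw.of_le one_le_two))
  obtain ⟨-, et⟩ := hasDerivAt_slices (diff (contDiffOn_energyDensity hp N hU hw))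
  obtain ⟨mr, -⟩ := hasDerivAt_slices (diff (contDiffOn_momentum N hU hw))
  have hsymm : fderiv ℝ (fun q => fderiv ℝ w q (1, 0)) (r, τ) (0, 1) =
      fderiv ℝ (fun q => fderiv ℝ w q (0, 1)) (r, τ) (1, 0) := by
    have hs : IsSymmSndFDerivAt ℝ w (r, τ) := (hw.contDiffAt hn).isSymmSndFDerivAt (by simp)
    have hd : DifferentiableAt ℝ (fderiv ℝ w) (r, τ) :=
      ((hw.fderiv_of_isOpen hU (m := 1) (by norm_num [one_add_one_eq_two])).contDiffAt
        hn).differentiableAt one_ne_zero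
    rw [fderiv_clm_apply hd (differentiableAt_const _),
      fderiv_clm_apply hd (differentiableAt_const _)]
    simpa using hs (0, 1) (1, 0)
  have e1 := ((((Qt.pow 2).const_mul (1 / 2)).add ((Pt.pow 2).const_mul (1 / 2))).sub
    ((((hasDerivAt_abs_rpow (w (r, τ)) (p := p + 1) (by linarith)).comp τ wt)).const_mul
      (1 / (p + 1)))).mul_const (r ^ (N - 1))
  have m1 := (Pr.mul Qr).mul (hasDerivAt_pow (N - 1) r)
  rw [et.unique e1, mr.unique m1, hsymm, heq]
  obtain ⟨k, rfl⟩ : ∃ k, N = k + 1 := ⟨N - 1, by omega⟩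
  have hpow : (k : ℝ) * r ^ (k - 1) = k / r * r ^ k := by
    rcases k with _ | k
    · simp
    · simp only [Nat.add_sub_cancel, pow_succ]; field_simp
  have hp1 : p + 1 ≠ 0 := by linarith
  simp only [Nat.add_sub_cancel, Pi.mul_apply, show p + 1 - 2 = p - 1 by ring]
  rw [hpow]
  push_cast
  field_simp
  ring

theorem stmt16 (p : ℝ) (hp : 1 < p) (N : ℕ) (hN : 1 ≤ N)
    (τ₀ : ℝ) (hτ₀ : τ₀ ∈ Set.Ioo (0 : ℝ) 1)
    (U : Set (ℝ × ℝ)) (hUopen : IsOpen U)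
    (hKU : {q : ℝ × ℝ | 0 ≤ q.2 ∧ q.2 ≤ τ₀ ∧ 0 ≤ q.1 ∧ q.1 ≤ 1 - q.2} ⊆ U)
    (v : ℝ → ℝ → ℝ) (hv : ContDiffOn ℝ 2 (fun q : ℝ × ℝ => v q.1 q.2) U)
    (hveq : ∀ r τ : ℝ, 0 < τ → τ < τ₀ → 0 < r → r < 1 - τ →
      deriv (fun σ => deriv (fun σ' => v r σ') σ) τ =
        deriv (fun z => deriv (fun z' => v z' τ) z) r
          + ((N : ℝ) - 1) / r * deriv (fun z => v z τ) r
          + |v r τ| ^ (p - 1) * v r τ)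
    (hNeu : ∀ τ ∈ Set.Icc (0 : ℝ) τ₀, deriv (fun z => v z τ) 0 = 0)
    (En : ℝ → ℝ)
    (hEn : ∀ τ : ℝ, En τ = ∫ r in (0 : ℝ)..(1 - τ),
      ((1 / 2) * deriv (fun σ => v r σ) τ ^ 2
        + (1 / 2) * deriv (fun z => v z τ) r ^ 2
        - (1 / (p + 1)) * |v r τ| ^ (p + 1)) * r ^ (N - 1)) :
    (∀ τ ∈ Set.Ioo (0 : ℝ) τ₀,
      HasDerivAt En
        (-(1 / 2) * (1 - τ) ^ (N - 1) *
            (deriv (fun σ => v (1 - τ) σ) τ - deriv (fun z => v z τ) (1 - τ)) ^ 2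
          + (1 / (p + 1)) * (1 - τ) ^ (N - 1) * |v (1 - τ) τ| ^ (p + 1)) τ) ∧
    En τ₀ ≤ En 0 +
      (1 / (p + 1)) * ∫ τ in (0 : ℝ)..τ₀, (1 - τ) ^ (N - 1) * |v (1 - τ) τ| ^ (p + 1) := by
  obtain ⟨h0, h1⟩ := hτ₀
  set w : ℝ × ℝ → ℝ := fun q => v q.1 q.2 with hwdef
  have hpar : ∀ r τ, (r, τ) ∈ U → deriv (fun z => v z τ) r = fderiv ℝ w (r, τ) (1, 0) ∧
      deriv (fun σ => v r σ) τ = fderiv ℝ w (r, τ) (0, 1) := fun r τ hq =>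
    have h := hasDerivAt_slices ((hv.contDiffAt (hUopen.mem_nhds hq)).differentiableAt two_ne_zero)
    ⟨h.1.deriv, h.2.deriv⟩
  have hcone : ∀ τ ∈ Icc 0 τ₀, ∀ x ∈ Icc (0 : ℝ) 1, coneMap (x, τ) ∈ U := by
    intro τ hτ x hx
    have h2 : 0 ≤ 1 - τ := by linarith [hτ.2]
    exact hKU ⟨hτ.1, hτ.2, mul_nonneg h2 hx.1, mul_le_of_le_one_right h2 hx.2⟩
  set F : ℝ → ℝ := fun s => ∫ x in (0 : ℝ)..1, (1 - s) * energyDensity p N w (coneMap (x, s))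
    with hF
  have hEF : ∀ τ ∈ Icc 0 τ₀, En τ = F τ := by
    intro τ hτ
    have hsub := intervalIntegral.mul_integral_comp_mul_left (a := (0 : ℝ)) (b := 1) (c := 1 - τ)
      (f := fun r => energyDensity p N w (r, τ))
    rw [mul_zero, mul_one, ← intervalIntegral.integral_const_mul] at hsub
    refine (hEn τ).trans (Eq.trans ?_ hsub.symm)
    refine intervalIntegral.integral_congr fun r hr => ?_
    rw [uIcc_of_le (by linarith [hτ.2])] at hr
    obtain ⟨ha, hb⟩ := hpar r τ (hKU ⟨hτ.1, hτ.2, hr.1, hr.2⟩)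
    simp only [energyDensity, ha, hb, hwdef]
  have hmain := fun τ (hτ : τ ∈ Icc 0 τ₀) => hasDerivAt_cone_integral hUopen
    (contDiffOn_energyDensity hp N hUopen hv) (contDiffOn_momentum N hUopen hv) (hcone τ hτ)
  have hderiv : ∀ τ ∈ Set.Ioo (0 : ℝ) τ₀,
      HasDerivAt En
        (-(1 / 2) * (1 - τ) ^ (N - 1) *
            (deriv (fun σ => v (1 - τ) σ) τ - deriv (fun z => v z τ) (1 - τ)) ^ 2
          + (1 / (p + 1)) * (1 - τ) ^ (N - 1) * |v (1 - τ) τ| ^ (p + 1)) τ := by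
    intro τ hτ
    have hτ' := Ioo_subset_Icc_self hτ
    have hpos : 0 < 1 - τ := by linarith [hτ.2]
    have hF' := (hmain τ hτ').2 fun x hx => by
      have hq := hcone τ hτ' x (Ioo_subset_Icc_self hx)
      have hr : 0 < (1 - τ) * x := mul_pos hpos hx.1
      refine conservation_law hp hN hUopen hv hr hq ?_
      change ((1 - τ) * x, τ) ∈ U at hq
      have hpde := hveq ((1 - τ) * x) τ hτ.1 hτ.2 hr (mul_lt_of_lt_one_right hpos hx.2)
      generalize (1 - τ) * x = r at hq hpde
      have hn := hUopen.mem_nhds hq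
      have diff := fun d => ((contDiffOn_partial hUopen hv d).contDiffAt hn).differentiableAt
        one_ne_zero
      -- The second-order slice derivatives only see the first-order ones near the point.
      have hrr : deriv (fun z => deriv (fun z' => v z' τ) z) r =
          fderiv ℝ (fun q => fderiv ℝ w q (1, 0)) (r, τ) (1, 0) := by
        rw [← (hasDerivAt_slices (diff (1, 0))).1.deriv]
        refine Filter.EventuallyEq.deriv_eq ?_
        have hc : Continuous fun z : ℝ => (z, τ) := by fun_prop
        filter_upwards [hc.continuousAt.preimage_mem_nhds hn] with z hz using (hpar z τ hz).1
      have htt : deriv (fun σ => deriv (fun σ' => v r σ') σ) τ =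
          fderiv ℝ (fun q => fderiv ℝ w q (0, 1)) (r, τ) (0, 1) := by
        rw [← (hasDerivAt_slices (diff (0, 1))).2.deriv]
        refine Filter.EventuallyEq.deriv_eq ?_
        have hc : Continuous fun s : ℝ => (r, s) := by fun_prop
        filter_upwards [hc.continuousAt.preimage_mem_nhds hn] with s hs using (hpar r s hs).2
      rw [hrr, htt, (hpar r τ hq).1] at hpde
      exact hpde
    have hE : En =ᶠ[nhds τ] F := by
      filter_upwards [Icc_mem_nhds hτ.1 hτ.2] with s hs using hEF s hs
    refine (hF'.congr_of_eventuallyEq hE).congr_deriv ?_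
    obtain ⟨ha, hb⟩ := hpar (1 - τ) τ (hKU ⟨hτ'.1, hτ'.2, hpos.le, le_rfl⟩)
    have hz : fderiv ℝ w (0, τ) (1, 0) = 0 := by
      rw [← (hpar 0 τ (hKU ⟨hτ'.1, hτ'.2, le_rfl, hpos.le⟩)).1, hNeu τ hτ']
    have hw1 : w (1 - τ, τ) = v (1 - τ) τ := rfl
    simp only [momentum, energyDensity, hz, ha, hb, hw1]
    ring
  refine ⟨hderiv, ?_⟩
  have hcont : ContinuousOn En (Icc 0 τ₀) :=
    ContinuousOn.congr (fun τ hτ => (hmain τ hτ).1.continuousAt.continuousWithinAt) hEF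
  have hwc : ContinuousOn (fun τ => v (1 - τ) τ) (Icc 0 τ₀) :=
    hv.continuousOn.comp (f := fun τ : ℝ => (1 - τ, τ)) (by fun_prop)
      (fun τ hτ => hKU ⟨hτ.1, hτ.2, by linarith [hτ.2], le_rfl⟩)
  have hφ : ContinuousOn
      (fun τ => (1 / (p + 1)) * ((1 - τ) ^ (N - 1) * |v (1 - τ) τ| ^ (p + 1))) (Icc 0 τ₀) :=
    continuousOn_const.mul (ContinuousOn.mul (by fun_prop)
      (hwc.abs.rpow_const fun _ _ => Or.inr (by linarith)))
  have hle := intervalIntegral.sub_le_integral_of_hasDeriv_right_of_le h0.le hcont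
    (fun τ hτ => (hderiv τ hτ).hasDerivWithinAt) (hφ.integrableOn_Icc) (fun τ hτ => by
      have : 0 ≤ (1 - τ) ^ (N - 1) := pow_nonneg (by linarith [hτ.2]) _
      have := mul_nonneg this
        (sq_nonneg (deriv (fun σ => v (1 - τ) σ) τ - deriv (fun z => v z τ) (1 - τ)))
      linarith)
  rw [intervalIntegral.integral_const_mul] at hle
  linarith
end
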